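/- arXiv:1502.06909 — 7 statements merged into one kernel-verified Lean document; each statement's English description precedes it below -/
import Mathlib

section
/- Let m > 2 and q > 0 be integers such that m is even or q is odd. Then for any prime p > m*q, the p-adic valuation of the rational number ∑_{k=0}^{p-1} (-1)^{k*m} * C(p/m - q, k)^m is at least 3; that is, ∑_{k=0}^{p-1} (-1)^{k*m} * C(p/m - q, k)^m ≡ 0 (mod p^3). -/
/-!
Put `q = r + 1`, `v_j = 1 / (r + 1 + j)` and `A_k = C(k + r, r)`, and work in `ℤ_[p]`. Up to sign,
`C(p/m - q, k)` is `∏_{j<k} (r + 1 + j - p/m) / (j + 1) = A_k ∏_{j<k} (1 - (p/m) v_j)`. For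
`k ≥ p - r` this is divisible by `p`, so its `m`-th power is `0` modulo `p ^ 3` because `m ≥ 3`.

For `k < p - r`, expanding in powers of `p` (`cube_dvd_prod_pow_sub`) gives, modulo `p ^ 3`,
`A_k ^ m ∏_{j<k} (1 - (p/m) v_j) ^ m ≡
  A_k ^ m ∏_{j<k} (1 - p v_j) + p ^ 2 h A_k ^ m ∑_{j<k} v_j ^ 2`, where `h = C(m, 2) / m ^ 2`.

* Since `A_k ∏_{j<k} (1 - p v_j) = (-1) ^ k C(p - r - 1, k)`, the first terms sum to
  `∑_k (-1) ^ k C(p - r - 1, k) A_k ^ (m - 1)`. This is exactly zero: it is a finite difference of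
  order `p - r - 1` of a polynomial in `k` of degree `(m - 1) r < p - r - 1`.
* The sum `∑_k A_k ^ m ∑_{j<k} v_j ^ 2` is `0` modulo `p` (`sum_shiftProd_mul_invSq`). The reflection
  `k ↦ p - 1 - r - k` multiplies `A_k ^ m` by `(-1) ^ (r m) = 1`, which is where the parity hypothesis
  enters. Averaging over it replaces the inner sum by a constant plus `∑_{i=1}^r 1 / (k + i) ^ 2`.
  As `m > 2`, the summand becomes a polynomial in `k` of degree `< p - 1`, whose sum over `ZMod p`
  vanishes.
-/

/-- Generalized binomial coefficient `C(α, k) = ∏_{j=1}^{k} (α - j + 1)/j`. -/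
def ratChoose (α : ℚ) (k : ℕ) : ℚ := ∏ j ∈ Finset.range k, (α - j) / (j + 1)

/-! ### Sums of polynomial values -/

open Polynomial in
/-- The `n`-th finite difference of a polynomial of degree `< n` vanishes, as an alternating sum. -/
lemma sum_alternating_choose_mul_eval {R : Type*} [CommRing R] (P : R[X]) (n : ℕ)
    (hP : P.natDegree < n) :
    ∑ k ∈ Finset.range (n + 1), (-1 : R) ^ k * (n.choose k : R) * P.eval (k : R) = 0 := by
  have h := congrFun (Polynomial.fwdDiff_iter_eq_zero_of_degree_lt hP) 0
  rw [fwdDiff_iter_eq_sum_shift] at h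
  have h2 : ∑ k ∈ Finset.range (n + 1), (-1 : R) ^ k * (n.choose k : R) * P.eval (k : R)
      = (-1) ^ n * ∑ k ∈ Finset.range (n + 1),
        ((-1 : ℤ) ^ (n - k) * n.choose k) • P.eval (0 + k • (1 : R)) := by
    rw [Finset.mul_sum]
    refine Finset.sum_congr rfl fun k hk => ?_
    have hk' : k ≤ n := by simpa [Nat.lt_succ_iff] using hk
    obtain ⟨d, rfl⟩ := Nat.exists_eq_add_of_le hk'
    have h1 : ((-1 : R) ^ d) * (-1) ^ d = 1 := by rw [← mul_pow]; simp
    simp only [zsmul_eq_mul, Nat.add_sub_cancel_left, nsmul_eq_mul, mul_one, zero_add]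
    push_cast
    rw [pow_add]
    linear_combination (-(-1 : R) ^ k * ((k + d).choose k : R) * P.eval (k : R)) * h1
  rw [h2, h]
  simp

open Polynomial in
/-- The sum of a polynomial of degree `< p - 1` over all of `ZMod p` vanishes, since each power sum
`∑ x ^ i` with `i < p - 1` does. -/
lemma sum_eval_zmod_eq_zero {p : ℕ} [Fact p.Prime] (P : (ZMod p)[X])
    (hP : P.natDegree < p - 1) :
    ∑ k ∈ Finset.range p, P.eval (k : ZMod p) = 0 := by
  have h1 : ∑ k ∈ Finset.range p, P.eval (k : ZMod p) = ∑ x : ZMod p, P.eval x := by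
    refine Finset.sum_bij (fun k _ => (k : ZMod p)) (fun _ _ => Finset.mem_univ _) ?_ ?_
      (fun _ _ => rfl)
    · intro a ha b hb hab
      rw [ZMod.natCast_eq_natCast_iff] at hab
      exact Nat.ModEq.eq_of_lt_of_lt hab (Finset.mem_range.1 ha) (Finset.mem_range.1 hb)
    · intro x _
      exact ⟨x.val, Finset.mem_range.2 (ZMod.val_lt x), by simp⟩
  rw [h1]
  simp_rw [Polynomial.eval_eq_sum_range]
  rw [Finset.sum_comm]
  refine Finset.sum_eq_zero fun i hi => ?_
  rw [← Finset.mul_sum, FiniteField.sum_pow_lt_card_sub_one, mul_zero]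
  rw [ZMod.card]
  have := Finset.mem_range.1 hi
  omega

open Polynomial in
/-- The polynomial `∏_{i ∈ s} (X + i + 1)`. For `s = {0, …, r - 1}` its value at `k` is
`r! * C(k + r, r)`. -/
noncomputable def shiftProd (R : Type*) [CommRing R] (s : Finset ℕ) : R[X] :=
  ∏ i ∈ s, (X + C ((i : R) + 1))

lemma shiftProd_eval {R : Type*} [CommRing R] (s : Finset ℕ) (x : R) :
    (shiftProd R s).eval x = ∏ i ∈ s, (x + (i + 1)) := by
  simp [shiftProd, Polynomial.eval_prod]

open Polynomial in
lemma shiftProd_natDegree_le {R : Type*} [CommRing R] [Nontrivial R] (s : Finset ℕ) :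
    (shiftProd R s).natDegree ≤ s.card := by
  refine (Polynomial.natDegree_prod_le _ _).trans ?_
  refine (Finset.sum_le_card_nsmul _ _ 1 fun i _ => ?_).trans (by simp)
  rw [natDegree_X_add_C]

lemma factorial_mul_choose_eq {R : Type*} [CommRing R] (k r : ℕ) :
    (r.factorial : R) * ((k + r).choose r : R) = (shiftProd R (Finset.range r)).eval (k : R) := by
  rw [shiftProd_eval, ← Nat.cast_mul, ← Nat.ascFactorial_eq_factorial_mul_choose,
    Nat.ascFactorial_eq_prod_range]
  push_cast
  exact Finset.prod_congr rfl fun i _ => by ring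

/-! ### Expansion of the products modulo a cube -/

lemma cube_dvd_one_sub_pow {R : Type*} [CommRing R] (x : R) (m : ℕ) :
    x ^ 3 ∣ (1 - x) ^ m - (1 - m * x + (m.choose 2 : R) * x ^ 2) := by
  induction m with
  | zero => simp
  | succ n ih =>
    obtain ⟨y, hy⟩ := ih
    refine ⟨y * (1 - x) - n.choose 2, ?_⟩
    rw [Nat.choose_succ_succ' n 1, Nat.choose_one_right, pow_succ]
    push_cast
    linear_combination (1 - x) * hy

lemma dvd_prod_one_sub {R : Type*} [CommRing R] (π : R) (v : ℕ → R) (k : ℕ) :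
    π ∣ ∏ j ∈ Finset.range k, (1 - π * v j) - 1 := by
  induction k with
  | zero => simp
  | succ n ih =>
    obtain ⟨y, hy⟩ := ih
    refine ⟨y * (1 - π * v n) - v n, ?_⟩
    rw [Finset.prod_range_succ]
    linear_combination (1 - π * v n) * hy

/-- With `d = 1 / m`, the products `∏ (1 - π d v_j) ^ m` and `∏ (1 - π v_j)` agree modulo `π ^ 2`,
and modulo `π ^ 3` they differ by `π ^ 2 C(m, 2) d ^ 2` times the power sum `∑ v_j ^ 2`. -/
lemma cube_dvd_prod_pow_sub {R : Type*} [CommRing R] (π d : R) (m : ℕ) (hd : m * d = 1)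
    (v : ℕ → R) (k : ℕ) :
    π ^ 3 ∣ (∏ j ∈ Finset.range k, (1 - π * d * v j)) ^ m
      - (∏ j ∈ Finset.range k, (1 - π * v j)
        + π ^ 2 * ((m.choose 2 : R) * d ^ 2) * ∑ j ∈ Finset.range k, v j ^ 2) := by
  induction k with
  | zero => simp
  | succ n ih =>
    obtain ⟨y, hy⟩ := ih
    obtain ⟨z, hz⟩ := cube_dvd_one_sub_pow (π * d * v n) m
    obtain ⟨f, hf⟩ := dvd_prod_one_sub π v n
    rw [Finset.prod_range_succ, Finset.prod_range_succ, Finset.sum_range_succ, mul_pow]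
    set F := ∏ j ∈ Finset.range n, (1 - π * v j)
    set E := ∏ j ∈ Finset.range n, (1 - π * d * v j)
    set H := ∑ j ∈ Finset.range n, v j ^ 2
    set b : R := (m.choose 2 : R)
    have hz' : (1 - π * d * v n) ^ m = 1 - π * v n + b * d ^ 2 * π ^ 2 * v n ^ 2
        + π ^ 3 * (d ^ 3 * v n ^ 3 * z) := by
      linear_combination hz - π * v n * hd
    have hy' : E ^ m = F + π ^ 2 * (b * d ^ 2) * H + π ^ 3 * y := by linear_combination hy
    have hf' : F = 1 + π * f := by linear_combination hf
    rw [hz', hy', hf']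
    refine ⟨f * (b * d ^ 2) * v n ^ 2 + (b * d ^ 2) * H * (-v n)
      + π * (b * d ^ 2) * H * (b * d ^ 2) * v n ^ 2
      + y * (1 - π * v n + b * d ^ 2 * π ^ 2 * v n ^ 2)
      + (1 + π * f + π ^ 2 * (b * d ^ 2) * H + π ^ 3 * y) * (d ^ 3 * v n ^ 3 * z), ?_⟩
    ring

/-! ### The correction term modulo `p` -/

section ModP

variable {p : ℕ} [Fact p.Prime]

/-- The power sum `∑_{a = 0}^{n} a⁻²` in `ZMod p`, with the convention `0⁻¹ = 0`. -/
def invSqSum (p : ℕ) [Fact p.Prime] (n : ℕ) : ZMod p :=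
  ∑ a ∈ Finset.range (n + 1), ((a : ZMod p)⁻¹) ^ 2

lemma invSqSum_add (n k : ℕ) :
    invSqSum p (n + k) = invSqSum p n
      + ∑ j ∈ Finset.range k, (((n + 1 + j : ℕ) : ZMod p)⁻¹) ^ 2 := by
  rw [invSqSum, invSqSum, ← Finset.sum_range_add]
  congr 2
  omega

/-- The reflection `a ↦ p - a` reverses the partial sums of `a⁻²`. -/
lemma invSqSum_reflect (n k : ℕ) (h : n + k + 1 = p) :
    invSqSum p n = invSqSum p (p - 1) - invSqSum p k := by
  have h1 : p - 1 = k + n := by omega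
  rw [h1, invSqSum_add, add_sub_cancel_left, invSqSum, Finset.sum_range_succ']
  simp only [Nat.cast_zero, inv_zero, ne_eq, OfNat.ofNat_ne_zero, not_false_eq_true, zero_pow,
    add_zero]
  rw [← Finset.sum_range_reflect]
  refine Finset.sum_congr rfl fun j hj => ?_
  have hj := Finset.mem_range.1 hj
  have h2 : ((n - 1 - j + 1 : ℕ) : ZMod p) = -((k + 1 + j : ℕ) : ZMod p) := by
    rw [eq_neg_iff_add_eq_zero, ← Nat.cast_add,
      show n - 1 - j + 1 + (k + 1 + j) = p by omega, ZMod.natCast_self]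
  rw [h2, inv_neg, neg_sq]

/-- Each factor `l + i` equals `-(k + r + 1 - i)` modulo `p`. -/
lemma shiftProd_eval_reflect (r k l : ℕ) (h : k + l + r + 1 = p) :
    (shiftProd (ZMod p) (Finset.range r)).eval (l : ZMod p)
      = (-1) ^ r * (shiftProd (ZMod p) (Finset.range r)).eval (k : ZMod p) := by
  rw [shiftProd_eval, shiftProd_eval, ← Finset.prod_range_reflect]
  have h3 : ((-1 : ZMod p)) ^ r = ∏ i ∈ Finset.range r, (-1 : ZMod p) := by simp
  rw [h3, ← Finset.prod_mul_distrib]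
  refine Finset.prod_congr rfl fun i hi => ?_
  have hi := Finset.mem_range.1 hi
  have h2 : ((l + (r - 1 - i + 1) + (k + (i + 1)) : ℕ) : ZMod p) = 0 := by
    rw [show l + (r - 1 - i + 1) + (k + (i + 1)) = p by omega, ZMod.natCast_self]
  push_cast at h2
  linear_combination h2

lemma shiftProd_eval_eq_zero (r k : ℕ) (hk : k < p) (h : p ≤ k + r) :
    (shiftProd (ZMod p) (Finset.range r)).eval (k : ZMod p) = 0 := by
  rw [shiftProd_eval]
  refine Finset.prod_eq_zero (i := p - 1 - k) (Finset.mem_range.2 (by omega)) ?_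
  have h2 : ((k + (p - 1 - k + 1) : ℕ) : ZMod p) = 0 := by
    rw [show k + (p - 1 - k + 1) = p by omega, ZMod.natCast_self]
  push_cast at h2
  exact h2

/-- The sum over `k < p - r` of `(k+1)^m ⋯ (k+r)^m ∑_{j < k} (r + 1 + j)⁻²` vanishes modulo `p`: after
symmetrising under `k ↦ p - 1 - r - k` the inner sum turns into a constant plus
`∑_{i=1}^r (k+i)⁻²`, so that the summand is a polynomial in `k` of degree `< p - 1`. -/
lemma sum_shiftProd_mul_invSq (m r : ℕ) (hm : 2 < m) (hmr : m * (r + 1) < p)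
    (hpar : Even (r * m)) :
    ∑ k ∈ Finset.range (p - r),
      (shiftProd (ZMod p) (Finset.range r)).eval (k : ZMod p) ^ m
        * ∑ j ∈ Finset.range k, (((r + 1 + j : ℕ) : ZMod p)⁻¹) ^ 2 = 0 := by
  set g : ZMod p → ZMod p := fun x => (shiftProd (ZMod p) (Finset.range r)).eval x with hg
  set H : ℕ → ZMod p := fun k => ∑ j ∈ Finset.range k, (((r + 1 + j : ℕ) : ZMod p)⁻¹) ^ 2 with hH
  have hrp : r + m < p := by nlinarith
  have hmr' : m * r + m < p := by linarith [mul_add m r 1]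
  have hext : ∀ f : ℕ → ZMod p, ∑ k ∈ Finset.range (p - r), g k ^ m * f k
      = ∑ k ∈ Finset.range p, g k ^ m * f k := by
    intro f
    refine Finset.sum_subset (Finset.range_mono (by omega)) fun k hk hk' => ?_
    rw [Finset.mem_range] at hk hk'
    rw [hg]
    dsimp only
    rw [shiftProd_eval_eq_zero r k hk (by omega), zero_pow (by omega), zero_mul]
  have hconst : ∑ k ∈ Finset.range p, g k ^ m = 0 := by
    have := sum_eval_zmod_eq_zero ((shiftProd (ZMod p) (Finset.range r)) ^ m) (by
      refine (Polynomial.natDegree_pow_le_of_le m (shiftProd_natDegree_le _)).trans_lt ?_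
      rw [Finset.card_range]; omega)
    simpa [hg] using this
  have hinv : ∀ i ∈ Finset.range r,
      ∑ k ∈ Finset.range p, g k ^ m * (((k + 1 + i : ℕ) : ZMod p)⁻¹) ^ 2 = 0 := by
    intro i hi
    set Q := (shiftProd (ZMod p) (Finset.range r)) ^ (m - 2)
      * (shiftProd (ZMod p) ((Finset.range r).erase i)) ^ 2 with hQ
    have hQd : Q.natDegree < p - 1 := by
      have h1 : Q.natDegree ≤ (m - 2) * r + 2 * (r - 1) := by
        refine Polynomial.natDegree_mul_le_of_le ?_ ?_
        · refine (Polynomial.natDegree_pow_le_of_le _ (shiftProd_natDegree_le _)).trans ?_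
          rw [Finset.card_range]
        · refine (Polynomial.natDegree_pow_le_of_le _ (shiftProd_natDegree_le _)).trans ?_
          rw [Finset.card_erase_of_mem hi, Finset.card_range]
      have h2 : (m - 2) * r + 2 * r = m * r := by rw [← add_mul]; congr 1; omega
      omega
    rw [← sum_eval_zmod_eq_zero Q hQd]
    refine Finset.sum_congr rfl fun k hk => ?_
    have hgk : g k = ((k + 1 + i : ℕ) : ZMod p)
        * (shiftProd (ZMod p) ((Finset.range r).erase i)).eval (k : ZMod p) := by
      rw [hg]
      dsimp only
      rw [shiftProd_eval, shiftProd_eval, ← Finset.mul_prod_erase _ _ hi]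
      push_cast
      ring
    have hQk : Q.eval (k : ZMod p) = g k ^ (m - 2)
        * (shiftProd (ZMod p) ((Finset.range r).erase i)).eval (k : ZMod p) ^ 2 := by
      simp [hQ, hg]
    rw [hQk]
    obtain ⟨n, rfl⟩ := Nat.exists_eq_add_of_lt hm
    -- At a root of the factor `k + 1 + i` both sides vanish because `m > 2`.
    rw [show 2 + n + 1 - 2 = n + 1 by omega, show 2 + n + 1 = (n + 1) + 2 by omega, pow_add _ (n+1) 2]
    by_cases h0 : ((k + 1 + i : ℕ) : ZMod p) = 0
    · rw [hgk, h0]; simp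
    · nth_rw 2 [hgk]
      field_simp
  have hrefl : ∀ k < p - r, H k + H (p - r - 1 - k)
      = (invSqSum p (p - 1) - 2 * invSqSum p r)
        + ∑ i ∈ Finset.range r, (((k + 1 + i : ℕ) : ZMod p)⁻¹) ^ 2 := by
    intro k hk
    have e1 := invSqSum_add (p := p) r k
    have e2 := invSqSum_add (p := p) r (p - r - 1 - k)
    have e3 := invSqSum_add (p := p) k r
    have e4 := invSqSum_reflect (p := p) (r + (p - r - 1 - k)) k (by omega)
    rw [add_comm k r] at e3
    simp only [hH]
    linear_combination -e1 - e2 + e3 + e4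
  have hsym : ∑ k ∈ Finset.range (p - r), g k ^ m * H k
      = ∑ k ∈ Finset.range (p - r), g k ^ m * H (p - r - 1 - k) := by
    rw [← Finset.sum_range_reflect]
    refine Finset.sum_congr rfl fun k hk => ?_
    have hk := Finset.mem_range.1 hk
    rw [hg]
    dsimp only
    rw [shiftProd_eval_reflect r k (p - r - 1 - k) (by omega), mul_pow, ← pow_mul,
      hpar.neg_one_pow, one_mul]
  have h2 : (2 : ZMod p) * ∑ k ∈ Finset.range (p - r), g k ^ m * H k = 0 := by
    rw [two_mul]
    nth_rw 2 [hsym]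
    rw [← Finset.sum_add_distrib]
    calc _ = ∑ k ∈ Finset.range (p - r), g k ^ m * ((invSqSum p (p - 1) - 2 * invSqSum p r)
        + ∑ i ∈ Finset.range r, (((k + 1 + i : ℕ) : ZMod p)⁻¹) ^ 2) := by
          refine Finset.sum_congr rfl fun k hk => ?_
          rw [← hrefl k (Finset.mem_range.1 hk), mul_add]
      _ = 0 := by
          rw [hext]
          simp_rw [mul_add, Finset.sum_add_distrib, ← Finset.sum_mul, Finset.mul_sum]
          rw [hconst, Finset.sum_comm, Finset.sum_eq_zero hinv]
          simp
  have h2ne : (2 : ZMod p) ≠ 0 := by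
    intro h
    have h' : ((2 : ℕ) : ZMod p) = 0 := by exact_mod_cast h
    rw [ZMod.natCast_eq_zero_iff] at h'
    have := Nat.le_of_dvd (by norm_num) h'
    omega
  exact (mul_eq_zero.1 h2).resolve_left h2ne

end ModP

/-! ### Binomial coefficients as products -/

/-- With `w j = 1 / (j + 1)` this is `∏_{j<k} (r + 1 + j) / (j + 1) = C(k + r, r)`. -/
lemma prod_eq_choose {R : Type*} [CommRing R] (w : ℕ → R) (r k : ℕ)
    (hw : ∀ j < k, ((j : R) + 1) * w j = 1) :
    ∏ j ∈ Finset.range k, ((r : R) + 1 + j) * w j = ((k + r).choose r : R) := by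
  induction k with
  | zero => simp
  | succ n ih =>
    rw [Finset.prod_range_succ, ih fun j hj => hw j (by omega)]
    have h1 := hw n (by omega)
    have h2 := Nat.choose_mul_succ_eq (n + r) r
    rw [show n + r + 1 - r = n + 1 by omega] at h2
    have h3 := congrArg (Nat.cast (R := R)) h2
    push_cast at h3
    rw [show n + 1 + r = n + r + 1 by ring]
    linear_combination w n * h3 + ((n + r + 1).choose r : R) * h1

/-- With `w j = 1 / (j + 1)` this is `∏_{j<k} (j - N) / (j + 1) = (-1) ^ k C(N, k)`. -/
lemma prod_eq_neg_one_pow_choose {R : Type*} [CommRing R] (w : ℕ → R) (N k : ℕ) (hk : k ≤ N)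
    (hw : ∀ j < k, ((j : R) + 1) * w j = 1) :
    ∏ j ∈ Finset.range k, ((j : R) - N) * w j = (-1) ^ k * (N.choose k : R) := by
  induction k with
  | zero => simp
  | succ n ih =>
    rw [Finset.prod_range_succ, ih (by omega) fun j hj => hw j (by omega)]
    have h1 := hw n (by omega)
    have h3 := congrArg (Nat.cast (R := R)) (Nat.choose_succ_right_eq N n)
    push_cast [Nat.cast_sub (show n ≤ N by omega)] at h3
    rw [pow_succ]
    linear_combination (-1) ^ n * w n * h3 - (-1) ^ n * (N.choose (n + 1) : R) * h1

/-! ### The congruence in the `p`-adic integers -/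

section Padic

variable {p : ℕ} [Fact p.Prime]

lemma natCast_mul_inverse (a : ℕ) (h0 : 0 < a) (h : a < p) :
    (a : ℤ_[p]) * Ring.inverse (a : ℤ_[p]) = 1 := by
  apply Ring.mul_inverse_cancel
  rw [PadicInt.isUnit_iff, PadicInt.norm_natCast_eq_one_iff]
  exact (Nat.coprime_of_lt_prime (by omega) h Fact.out)

lemma dvd_iff_toZMod_eq_zero (x : ℤ_[p]) : (p : ℤ_[p]) ∣ x ↔ PadicInt.toZMod x = 0 := by
  rw [← RingHom.mem_ker, PadicInt.ker_toZMod, PadicInt.maximalIdeal_eq_span_p,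
    Ideal.mem_span_singleton]

/-- The congruence in `ℤ_[p]`, for `q = r + 1` and with `d = 1 / m`, `w j = 1 / (j + 1)`. -/
lemma cube_dvd_sum (m r : ℕ) (hm : 2 < m) (hmr : m * (r + 1) < p) (hpar : Even (r * m))
    (d : ℤ_[p]) (hd : m * d = 1) (w : ℕ → ℤ_[p]) (hw : ∀ j < p - 1, ((j : ℤ_[p]) + 1) * w j = 1) :
    (p : ℤ_[p]) ^ 3 ∣ ∑ k ∈ Finset.range p,
      (∏ j ∈ Finset.range k, ((r : ℤ_[p]) + 1 + j - p * d) * w j) ^ m := by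
  have hrp : r + m < p := by nlinarith
  have hmr' : m * r + m < p := by linarith [mul_add m r 1]
  have hfac : (r.factorial : ℤ_[p]) ≠ 0 := by exact_mod_cast r.factorial_ne_zero
  set v : ℕ → ℤ_[p] := fun j => Ring.inverse ((r + 1 + j : ℕ) : ℤ_[p]) with hv
  have hvj : ∀ j < p - r - 1, ((r : ℤ_[p]) + 1 + j) * v j = 1 := by
    intro j hj
    have := natCast_mul_inverse (p := p) (r + 1 + j) (by omega) (by omega)
    push_cast at this
    simpa [hv] using this
  have hfactor : ∀ c : ℤ_[p], ∀ k < p - r,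
      ∏ j ∈ Finset.range k, ((r : ℤ_[p]) + 1 + j - c) * w j
        = ((k + r).choose r : ℤ_[p]) * ∏ j ∈ Finset.range k, (1 - c * v j) := by
    intro c k hk
    rw [← prod_eq_choose w r k fun j hj => hw j (by omega), ← Finset.prod_mul_distrib]
    refine Finset.prod_congr rfl fun j hj => ?_
    have hj := Finset.mem_range.1 hj
    linear_combination c * w j * hvj j (by omega)
  -- For `k ≥ p - r` the factor with `r + 1 + j = p` makes the product divisible by `p`.
  have htail : ∀ k ∈ Finset.range p, k ∉ Finset.range (p - r) →
      (p : ℤ_[p]) ^ 3 ∣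
        (∏ j ∈ Finset.range k, ((r : ℤ_[p]) + 1 + j - p * d) * w j) ^ m := by
    intro k hk hk'
    rw [Finset.mem_range] at hk hk'
    refine (pow_dvd_pow _ (by omega : 3 ≤ m)).trans (pow_dvd_pow_of_dvd ?_ m)
    refine Dvd.dvd.trans ?_ (Finset.dvd_prod_of_mem _ (Finset.mem_range.2 (by omega : p - r - 1 < k)))
    have h1 : ((r : ℤ_[p]) + 1 + (p - r - 1 : ℕ)) = p := by
      have : ((r + 1 + (p - r - 1) : ℕ) : ℤ_[p]) = p := by congr 1; omega
      rw [← this]; push_cast; ring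
    rw [h1]
    exact ⟨(1 - d) * w (p - r - 1), by ring⟩
  have hsplit := Finset.sum_sdiff (Finset.range_mono (show p - r ≤ p by omega))
    (f := fun k => (∏ j ∈ Finset.range k, ((r : ℤ_[p]) + 1 + j - p * d) * w j) ^ m)
  rw [← hsplit]
  refine dvd_add (Finset.dvd_sum fun k hk => ?_) ?_
  · rw [Finset.mem_sdiff] at hk
    exact htail k hk.1 hk.2
  -- Multiplying by `r! ^ (m - 1)` turns the sum into an alternating sum of polynomial values.
  have hmain : ∑ k ∈ Finset.range (p - r), ((k + r).choose r : ℤ_[p]) ^ m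
      * ∏ j ∈ Finset.range k, (1 - (p : ℤ_[p]) * v j) = 0 := by
    have hN : p - r = (p - r - 1) + 1 := by omega
    have h1 := sum_alternating_choose_mul_eval
      ((shiftProd ℤ_[p] (Finset.range r)) ^ (m - 1)) (p - r - 1) (by
        refine (Polynomial.natDegree_pow_le_of_le _ (shiftProd_natDegree_le _)).trans_lt ?_
        have h2 : (m - 1) * r + r = m * r := by
          nth_rw 2 [← one_mul r]; rw [← add_mul]; congr 1; omega
        rw [Finset.card_range]; omega)
    rw [← hN] at h1
    refine (mul_eq_zero.1 ?_).resolve_left (pow_ne_zero (m - 1) hfac)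
    rw [← h1, Finset.mul_sum]
    refine Finset.sum_congr rfl fun k hk => ?_
    have hk := Finset.mem_range.1 hk
    have h3 := hfactor p k hk
    have h4 := prod_eq_neg_one_pow_choose w (p - r - 1) k (by omega) fun j hj => hw j (by omega)
    have h5 : ∏ j ∈ Finset.range k, ((r : ℤ_[p]) + 1 + j - p) * w j
        = ∏ j ∈ Finset.range k, ((j : ℤ_[p]) - (p - r - 1 : ℕ)) * w j := by
      refine Finset.prod_congr rfl fun j _ => ?_
      rw [Nat.cast_sub (by omega), Nat.cast_sub (by omega)]
      push_cast
      ring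
    rw [Polynomial.eval_pow, ← factorial_mul_choose_eq, ← h4, ← h5, h3, mul_pow]
    have h6 : ((k + r).choose r : ℤ_[p]) ^ m
        = ((k + r).choose r : ℤ_[p]) ^ (m - 1) * ((k + r).choose r : ℤ_[p]) := by
      rw [← pow_succ]; congr 1; omega
    rw [h6]
    ring
  have hcorr : (p : ℤ_[p]) ∣ ∑ k ∈ Finset.range (p - r), ((k + r).choose r : ℤ_[p]) ^ m
      * ∑ j ∈ Finset.range k, v j ^ 2 := by
    rw [dvd_iff_toZMod_eq_zero]
    have hfac' : ((r.factorial : ZMod p)) ≠ 0 := by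
      rw [Ne, ZMod.natCast_eq_zero_iff, (Fact.out : p.Prime).dvd_factorial]
      omega
    refine (mul_eq_zero.1 ?_).resolve_left (pow_ne_zero m hfac')
    rw [← sum_shiftProd_mul_invSq m r hm hmr hpar, map_sum, Finset.mul_sum]
    refine Finset.sum_congr rfl fun k hk => ?_
    have hk := Finset.mem_range.1 hk
    rw [map_mul, map_pow, map_natCast, map_sum, ← factorial_mul_choose_eq, mul_pow, mul_assoc]
    congr 2
    refine Finset.sum_congr rfl fun j hj => ?_
    have hj := Finset.mem_range.1 hj
    rw [map_pow]
    congr 1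
    have h1 := congrArg PadicInt.toZMod (hvj j (by omega))
    rw [map_mul, map_one] at h1
    refine eq_inv_of_mul_eq_one_right ?_
    rw [← h1]
    simp
  have hexp : ∀ k ∈ Finset.range (p - r), (p : ℤ_[p]) ^ 3 ∣
      (∏ j ∈ Finset.range k, ((r : ℤ_[p]) + 1 + j - p * d) * w j) ^ m
      - (((k + r).choose r : ℤ_[p]) ^ m * ∏ j ∈ Finset.range k, (1 - (p : ℤ_[p]) * v j)
        + (p : ℤ_[p]) ^ 2 * ((m.choose 2 : ℤ_[p]) * d ^ 2) * (((k + r).choose r : ℤ_[p]) ^ m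
          * ∑ j ∈ Finset.range k, v j ^ 2)) := by
    intro k hk
    rw [hfactor _ k (Finset.mem_range.1 hk), mul_pow]
    obtain ⟨y, hy⟩ := cube_dvd_prod_pow_sub (p : ℤ_[p]) d m hd v k
    exact ⟨((k + r).choose r : ℤ_[p]) ^ m * y, by
      linear_combination ((k + r).choose r : ℤ_[p]) ^ m * hy⟩
  have hsum := Finset.dvd_sum hexp
  rw [Finset.sum_sub_distrib, Finset.sum_add_distrib, hmain, zero_add, ← Finset.mul_sum] at hsum
  refine (dvd_sub_comm.1 hsum |> (dvd_sub_right ?_).1 : _)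
  obtain ⟨y, hy⟩ := hcorr
  exact ⟨(m.choose 2 : ℤ_[p]) * d ^ 2 * y, by rw [hy]; ring⟩

end Padic

theorem stmt0 (m q : ℕ) (hm : 2 < m) (hq : 0 < q) (hmq : Even m ∨ Odd q)
    (p : ℕ) (hp : p.Prime) (hpmq : m * q < p) :
    padicNorm p (∑ k ∈ Finset.range p,
        (-1 : ℚ) ^ (k * m) * ratChoose ((p : ℚ) / m - q) k ^ m)
      ≤ (p : ℚ) ^ (-(3 : ℤ)) := by
  have : Fact p.Prime := ⟨hp⟩
  obtain ⟨r, rfl⟩ : ∃ r, q = r + 1 := ⟨q - 1, by omega⟩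
  have hpar : Even (r * m) := by
    rcases hmq with h | h
    · exact h.mul_left r
    · exact (by simpa [Nat.odd_add_one] using h : Even r).mul_right m
  have hmp : m < p := by nlinarith
  have hd := natCast_mul_inverse (p := p) m (by omega) hmp
  set d : ℤ_[p] := Ring.inverse (m : ℤ_[p])
  set w : ℕ → ℤ_[p] := fun j => Ring.inverse ((j + 1 : ℕ) : ℤ_[p]) with hwdef
  have hw : ∀ j < p - 1, ((j : ℤ_[p]) + 1) * w j = 1 := by
    intro j hj
    have := natCast_mul_inverse (p := p) (j + 1) (by omega) (by omega)
    push_cast at this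
    simpa [hwdef] using this
  have hdvd := cube_dvd_sum m r hm hpmq hpar d hd w hw
  have hnorm := (PadicInt.norm_le_pow_iff_mem_span_pow _ 3).2 (Ideal.mem_span_singleton.2 hdvd)
  have hdQ : (d : ℚ_[p]) = (m : ℚ_[p])⁻¹ := by
    refine eq_inv_of_mul_eq_one_right ?_
    exact_mod_cast congrArg (Subtype.val) hd
  have hwQ : ∀ j < p - 1, (w j : ℚ_[p]) = ((j : ℚ_[p]) + 1)⁻¹ := by
    intro j hj
    refine eq_inv_of_mul_eq_one_right ?_
    exact_mod_cast congrArg (Subtype.val) (hw j hj)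
  have hcast : ((∑ k ∈ Finset.range p,
      (∏ j ∈ Finset.range k, ((r : ℤ_[p]) + 1 + j - p * d) * w j) ^ m : ℤ_[p]) : ℚ_[p])
      = ((∑ k ∈ Finset.range p,
        (-1 : ℚ) ^ (k * m) * ratChoose ((p : ℚ) / m - (r + 1 : ℕ)) k ^ m : ℚ) : ℚ_[p]) := by
    have hcoe : ∀ x : ℤ_[p], (x : ℚ_[p]) = PadicInt.Coe.ringHom x := fun _ => rfl
    rw [hcoe, map_sum, Rat.cast_sum]
    refine Finset.sum_congr rfl fun k hk => ?_
    have hk := Finset.mem_range.1 hk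
    rw [pow_mul, ← mul_pow, map_pow, map_prod, Rat.cast_pow]
    congr 1
    have h3 : ((-1 : ℚ)) ^ k = ∏ i ∈ Finset.range k, (-1 : ℚ) := by simp
    rw [h3, ratChoose, ← Finset.prod_mul_distrib, Rat.cast_prod]
    refine Finset.prod_congr rfl fun j hj => ?_
    have hj := Finset.mem_range.1 hj
    rw [← hcoe]
    push_cast
    rw [hdQ, hwQ j (by omega)]
    simp only [div_eq_mul_inv]
    ring
  rw [PadicInt.norm_def, hcast, Padic.eq_padicNorm] at hnorm
  have h5 : (((p : ℚ) ^ (-(3 : ℤ)) : ℚ) : ℝ) = (p : ℝ) ^ (-((3 : ℕ) : ℤ)) := by push_cast; rfl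
  rw [← h5] at hnorm
  exact_mod_cast hnorm
end

section
/- For any prime p > 3, the p-adic valuation of the rational number ∑_{k=0}^{p-1} C(-1/(p+1), k)^{p+1} is at least 5; that is, ∑_{k=0}^{p-1} C(-1/(p+1), k)^{p+1} ≡ 0 (mod p^5). -/
section Core

variable {R : Type*} [CommRing R]

/-- The binomial expansion of `(1 - y) ^ n` when `y ^ 5 = 0`; here `h = 1/2` and `s = 1/3`. -/
lemma one_sub_pow_of_pow_five (y h s : R) (hh : 2 * h = 1) (hs : 3 * s = 1) (hy : y ^ 5 = 0)
    (n : ℕ) :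
    (1 - y) ^ n = 1 - n * y + n * (n - 1) * h * y ^ 2 - n * (n - 1) * (n - 2) * h * s * y ^ 3
      + n * (n - 1) * (n - 2) * (n - 3) * h ^ 3 * s * y ^ 4 := by
  have choose_eq : (1 - y) ^ n = 1 - n * y + n.choose 2 * y ^ 2 - n.choose 3 * y ^ 3
      + n.choose 4 * y ^ 4 := by
    induction n with
    | zero => simp
    | succ n ih =>
      rw [pow_succ, ih]
      simp only [Nat.choose_succ_succ' n, Nat.choose_one_right, Nat.reduceAdd]
      push_cast
      linear_combination (-(n.choose 4 : R)) * hy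
  have h2 : ∀ n : ℕ, (n.choose 2 : R) * 2 = n * (n - 1) := by
    intro n
    induction n with
    | zero => simp
    | succ n ih =>
      rw [Nat.choose_succ_succ' n 1, Nat.choose_one_right]
      push_cast
      linear_combination ih
  have h3 : ∀ n : ℕ, (n.choose 3 : R) * 6 = n * (n - 1) * (n - 2) := by
    intro n
    induction n with
    | zero => simp
    | succ n ih =>
      rw [Nat.choose_succ_succ' n 2]
      push_cast
      linear_combination ih + 3 * h2 n
  have h4 : ∀ n : ℕ, (n.choose 4 : R) * 24 = n * (n - 1) * (n - 2) * (n - 3) := by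
    intro n
    induction n with
    | zero => simp
    | succ n ih =>
      rw [Nat.choose_succ_succ' n 3]
      push_cast
      linear_combination ih + 4 * h3 n
  have e6 : 6 * (h * s) = 1 := by linear_combination 3 * s * hh + hs
  have e24 : 24 * (h ^ 3 * s) = 1 := by
    linear_combination (4 * h ^ 2) * e6 + (2 * h + 1) * hh
  rw [choose_eq]
  linear_combination (h * y ^ 2) * h2 n - (h * s * y ^ 3) * h3 n + (h ^ 3 * s * y ^ 4) * h4 n
    - (n.choose 2 * y ^ 2) * hh + (n.choose 3 * y ^ 3) * e6 - (n.choose 4 * y ^ 4) * e24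

lemma factor_eq (q u v h s : R) (m : ℕ) (hm : (m : R) = q + 1) (hq : q ^ 5 = 0)
    (hh : 2 * h = 1) (hs : 3 * s = 1) (hv : (q + 1) * v = 1) :
    (1 - q * v * u) ^ m
      = (1 - q * u) * (1 + (q ^ 3 * (1 - q) * h * u ^ 2 + 2 * s * q ^ 4 * u ^ 3)) := by
  have hy : (q * v * u) ^ 5 = 0 := by rw [mul_pow, mul_pow, hq]; ring
  rw [one_sub_pow_of_pow_five _ h s hh hs hy, hm]
  have e1 : q ^ 4 * v = q ^ 4 := by linear_combination q ^ 4 * hv - v * hq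
  have e2 : q ^ 3 * v = q ^ 3 * (1 - q) := by linear_combination q ^ 3 * hv - e1
  -- the four terms of positive degree in `u`
  have t1 : (q + 1) * (q * v * u) = q * u := by linear_combination q * u * hv
  have t2 : (q + 1) * (q + 1 - 1) * h * (q * v * u) ^ 2 = q ^ 3 * (1 - q) * h * u ^ 2 := by
    linear_combination h * u ^ 2 * q ^ 3 * v * hv + h * u ^ 2 * e2
  have t3 : (q + 1) * (q + 1 - 1) * (q + 1 - 2) * h * s * (q * v * u) ^ 3
      = - (q ^ 4 * h * s * u ^ 3) := by
    linear_combination (q ^ 4 * (q - 1) * h * s * u ^ 3 * v ^ 2) * hv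
      + (h * s * u ^ 3 * v ^ 2) * hq - (h * s * u ^ 3) * (v + 1) * e1
  have t4 : (q + 1) * (q + 1 - 1) * (q + 1 - 2) * (q + 1 - 3) * h ^ 3 * s * (q * v * u) ^ 4
      = 0 := by
    linear_combination ((q + 1) * (q - 1) * (q - 2) * h ^ 3 * s * (v * u) ^ 4) * hq
  rw [t1, t2, t3, t4]
  -- the cubic coefficient is `q⁴/6 = 2q⁴/3 - q⁴/2`
  linear_combination (-(h * u ^ 3) + 2 * s * u ^ 4) * hq
    + (q ^ 4 * u ^ 3 * (2 * s)) * hh - (q ^ 4 * u ^ 3 * h) * hs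

lemma prod_factor_eq (q a b : R) (u : ℕ → R) (haa : a * a = 0) (hab : a * b = 0)
    (hbb : b * b = 0) (k : ℕ) :
    ∏ j ∈ Finset.range k, ((1 - q * u j) * (1 + (a * u j ^ 2 + b * u j ^ 3)))
      = (∏ j ∈ Finset.range k, (1 - q * u j))
        * (1 + ∑ j ∈ Finset.range k, (a * u j ^ 2 + b * u j ^ 3)) := by
  rw [Finset.prod_mul_distrib]
  congr 1
  induction k with
  | zero => simp
  | succ k ih =>
    rw [Finset.prod_range_succ, ih, Finset.sum_range_succ, Finset.sum_add_distrib,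
      ← Finset.mul_sum, ← Finset.mul_sum]
    set A := ∑ j ∈ Finset.range k, u j ^ 2
    set B := ∑ j ∈ Finset.range k, u j ^ 3
    linear_combination (A * u k ^ 2) * haa + (A * u k ^ 3 + B * u k ^ 2) * hab
      + (B * u k ^ 3) * hbb

/-- Summation by parts against `c k = ∏_{j<k} (1 - q / (j + 1))`, whose partial sums are
`(1 - q) ∑_{k≤n} c k = (n + 1 - q) c n`. -/
lemma abel_sum (q : R) (u w : ℕ → R) (n : ℕ) (hu : ∀ j < n, ((j : R) + 1) * u j = 1) :
    (1 - q) * ∑ k ∈ Finset.range (n + 1), (∏ j ∈ Finset.range k, (1 - q * u j))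
        * (1 + ∑ j ∈ Finset.range k, w j)
      = (n + 1 - q) * (∏ j ∈ Finset.range n, (1 - q * u j)) * (1 + ∑ j ∈ Finset.range n, w j)
        - ∑ k ∈ Finset.range n, (∏ j ∈ Finset.range (k + 1), (1 - q * u j)) * ((k + 1) * w k) := by
  induction n with
  | zero => simp
  | succ n ih =>
    rw [Finset.sum_range_succ, mul_add, ih fun j hj => hu j (by omega),
      Finset.sum_range_succ _ n, Finset.sum_range_succ _ n, Finset.prod_range_succ]
    have := hu n (by omega)
    push_cast
    set c := ∏ j ∈ Finset.range n, (1 - q * u j)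
    set W := ∑ j ∈ Finset.range n, w j
    linear_combination (q * c * (1 + W)) * this

/-- `c k = ∏_{j<k} (1 - q / (j + 1))` to first order in `q`. -/
lemma pow_three_mul_prod (q : R) (u : ℕ → R) (hq : q ^ 5 = 0) (k : ℕ) :
    q ^ 3 * ∏ j ∈ Finset.range k, (1 - q * u j)
      = q ^ 3 - q ^ 4 * ∑ j ∈ Finset.range k, u j := by
  induction k with
  | zero => simp
  | succ k ih =>
    rw [Finset.prod_range_succ, ← mul_assoc, ih, Finset.sum_range_succ]
    linear_combination ((∑ j ∈ Finset.range k, u j) * u k) * hq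

lemma two_mul_sum_mul_sum (u : ℕ → R) (n : ℕ) :
    2 * ∑ k ∈ Finset.range n, u k * ∑ j ∈ Finset.range (k + 1), u j
      = (∑ k ∈ Finset.range n, u k) ^ 2 + ∑ k ∈ Finset.range n, u k ^ 2 := by
  induction n with
  | zero => simp
  | succ n ih =>
    simp only [Finset.sum_range_succ _ n, mul_add]
    linear_combination ih

/-- Wolstenholme's congruence `H₁ ≡ 0 (mod q²)`, deduced from `H₂ ≡ 0 (mod q)` by the reflection
`j ↦ q - j` (here `q = n + 1`). -/
lemma wolstenholme (q h : R) (u : ℕ → R) (n : ℕ) (hn : (n : R) + 1 = q) (hq : q ^ 5 = 0)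
    (hh : 2 * h = 1) (hu : ∀ j < n, ((j : R) + 1) * u j = 1)
    (hH2 : q ^ 4 * ∑ j ∈ Finset.range n, u j ^ 2 = 0) :
    q ^ 3 * ∑ j ∈ Finset.range n, u j = 0 := by
  have hrefl := Finset.sum_range_reflect u n
  have key : ∀ j ∈ Finset.range n,
      q ^ 3 * (u j + u (n - 1 - j)) = - (q ^ 4 * u j ^ 2) := by
    intro j hj
    rw [Finset.mem_range] at hj
    have h1 := hu j hj
    have h2 := hu (n - 1 - j) (by omega)
    have h3 : ((n - 1 - j : ℕ) : R) + 1 = q - (j + 1) := by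
      rw [← hn]
      have : ((n - 1 - j : ℕ) : R) + ((j + 1 : ℕ) : R) = (n : R) := by
        rw [← Nat.cast_add]; congr 1; omega
      push_cast at this
      linear_combination this
    rw [h3] at h2
    set x := u j
    set y := u (n - 1 - j)
    -- `x + y = q x y`, hence also `q⁴ y = -q⁴ x`
    have e : x + y = q * x * y := by linear_combination (-y) * h1 - x * h2
    linear_combination (q ^ 3 + q ^ 4 * x) * e + x ^ 2 * y * hq
  have : 2 * (q ^ 3 * ∑ j ∈ Finset.range n, u j) = 0 := by
    calc 2 * (q ^ 3 * ∑ j ∈ Finset.range n, u j)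
        = ∑ j ∈ Finset.range n, q ^ 3 * (u j + u (n - 1 - j)) := by
          rw [← Finset.mul_sum, Finset.sum_add_distrib, hrefl]; ring
      _ = - (q ^ 4 * ∑ j ∈ Finset.range n, u j ^ 2) := by
          rw [Finset.sum_congr rfl key, Finset.sum_neg_distrib, Finset.mul_sum]
      _ = 0 := by rw [hH2, neg_zero]
  linear_combination h * this - (q ^ 3 * ∑ j ∈ Finset.range n, u j) * hh

/-- The vanishing of the sum in any commutative ring where `q = n + 1` satisfies `q ^ 5 = 0`, the
numbers `2, 3, 1, …, n, q + 1` are invertible and `q ^ 4 * H₂ = 0`. -/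
lemma core (q v h s : R) (u : ℕ → R) (n : ℕ) (hn : (n : R) + 1 = q) (hq : q ^ 5 = 0)
    (hh : 2 * h = 1) (hs : 3 * s = 1) (hv : (q + 1) * v = 1)
    (hu : ∀ j < n, ((j : R) + 1) * u j = 1)
    (hH2 : q ^ 4 * ∑ j ∈ Finset.range n, u j ^ 2 = 0) :
    ∑ k ∈ Finset.range (n + 1), (∏ j ∈ Finset.range k, (1 - q * v * u j)) ^ (n + 2) = 0 := by
  have hm : ((n + 2 : ℕ) : R) = q + 1 := by push_cast; linear_combination hn
  have hH1 := wolstenholme q h u n hn hq hh hu hH2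
  set a := q ^ 3 * (1 - q) * h with ha
  set b := 2 * s * q ^ 4 with hb
  have haa : a * a = 0 := by rw [ha]; linear_combination (q * (1 - q) ^ 2 * h ^ 2) * hq
  have hab : a * b = 0 := by rw [ha, hb]; linear_combination (q ^ 2 * (1 - q) * h * 2 * s) * hq
  have hbb : b * b = 0 := by rw [hb]; linear_combination (q ^ 3 * 4 * s ^ 2) * hq
  have hsum : ∀ k, (∏ j ∈ Finset.range k, (1 - q * v * u j)) ^ (n + 2)
      = (∏ j ∈ Finset.range k, (1 - q * u j))
        * (1 + ∑ j ∈ Finset.range k, (a * u j ^ 2 + b * u j ^ 3)) := by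
    intro k
    rw [← Finset.prod_pow, ← prod_factor_eq q a b u haa hab hbb]
    exact Finset.prod_congr rfl fun j _ => factor_eq q (u j) v h s (n + 2) hm hq hh hs hv
  simp only [hsum]
  have habel := abel_sum q u (fun j => a * u j ^ 2 + b * u j ^ 3) n hu
  rw [hn, sub_self, zero_mul, zero_mul, zero_sub] at habel
  have hrest : ∑ k ∈ Finset.range n, (∏ j ∈ Finset.range (k + 1), (1 - q * u j))
      * ((k + 1) * (a * u k ^ 2 + b * u k ^ 3)) = 0 := by
    have step : ∀ k ∈ Finset.range n, (∏ j ∈ Finset.range (k + 1), (1 - q * u j))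
        * ((k + 1) * (a * u k ^ 2 + b * u k ^ 3))
        = a * u k - q ^ 4 * h * (u k * ∑ j ∈ Finset.range (k + 1), u j) + b * u k ^ 2 := by
      intro k hk
      have h1 := hu k (Finset.mem_range.1 hk)
      have h2 := pow_three_mul_prod q u hq (k + 1)
      set c := ∏ j ∈ Finset.range (k + 1), (1 - q * u j)
      set H := ∑ j ∈ Finset.range (k + 1), u j
      rw [ha, hb]
      linear_combination c * (q ^ 3 * (1 - q) * h * u k + 2 * s * q ^ 4 * u k ^ 2) * h1
        + ((1 - q) * h * u k + 2 * s * q * u k ^ 2) * h2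
        + (h * u k * H - 2 * s * u k ^ 2 * H) * hq
    rw [Finset.sum_congr rfl step, Finset.sum_add_distrib, Finset.sum_sub_distrib,
      ← Finset.mul_sum, ← Finset.mul_sum, ← Finset.mul_sum]
    have h2 := two_mul_sum_mul_sum u n
    set H := ∑ k ∈ Finset.range n, u k
    set D := ∑ k ∈ Finset.range n, u k * ∑ j ∈ Finset.range (k + 1), u j
    set H₂ := ∑ k ∈ Finset.range n, u k ^ 2
    rw [ha, hb]
    linear_combination ((1 - q) * h - q * h ^ 2 * H) * hH1 + (2 * s - h ^ 2) * hH2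
      - (q ^ 4 * h ^ 2) * h2 + (q ^ 4 * h * D) * hh
  rw [hrest, neg_zero] at habel
  -- `1 - q` is invertible because `q` is nilpotent
  linear_combination (1 + q + q ^ 2 + q ^ 3 + q ^ 4) * habel
    + (∑ k ∈ Finset.range (n + 1), (∏ j ∈ Finset.range k, (1 - q * u j))
        * (1 + ∑ j ∈ Finset.range k, (a * u j ^ 2 + b * u j ^ 3))) * hq

end Core

lemma sum_inv_sq_zmod (n : ℕ) [hp : Fact (n + 1).Prime] (hn : 3 < n + 1) :
    ∑ j ∈ Finset.range n, ((j + 1 : ZMod (n + 1))⁻¹) ^ 2 = 0 := by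
  have h1 : ∑ x : ZMod (n + 1), x⁻¹ ^ 2 = 0 := by
    rw [← FiniteField.sum_pow_lt_card_sub_one (ZMod (n + 1)) 2 (by rw [ZMod.card]; omega)]
    exact (inv_involutive.bijective (α := ZMod (n + 1))).sum_comp (fun x => x ^ 2)
  have h2 : ∑ x : ZMod (n + 1), x⁻¹ ^ 2
      = ∑ i : Fin (n + 1), ((i : ℕ) : ZMod (n + 1))⁻¹ ^ 2 :=
    Finset.sum_congr rfl fun x _ => by
      congr 2
      exact (ZMod.natCast_zmod_val x).symm
  rw [h2, Fin.sum_univ_eq_sum_range (fun i => ((i : ℕ) : ZMod (n + 1))⁻¹ ^ 2),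
    Finset.sum_range_succ'] at h1
  simpa using h1

lemma exists_padicInt_inv (p : ℕ) [hp : Fact p.Prime] (m : ℕ) (hm : ¬ p ∣ m) :
    ∃ x : ℤ_[p], (m : ℤ_[p]) * x = 1 := by
  have : IsUnit (m : ℤ_[p]) := by
    rw [PadicInt.isUnit_iff]
    refine le_antisymm (PadicInt.norm_le_one _) (not_lt.1 fun hlt => hm ?_)
    have := (PadicInt.norm_int_lt_one_iff_dvd (p := p) (m : ℤ)).1 (by exact_mod_cast hlt)
    exact_mod_cast this
  exact this.exists_right_inv

theorem stmt1 (p : ℕ) (hp : p.Prime) (hp3 : 3 < p) :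
    padicNorm p (∑ k ∈ Finset.range p, ratChoose (-1 / ((p : ℚ) + 1)) k ^ (p + 1))
      ≤ (p : ℚ) ^ (-(5 : ℤ)) := by
  obtain ⟨n, rfl⟩ : ∃ n, p = n + 1 := ⟨p - 1, by omega⟩
  have : Fact (n + 1).Prime := ⟨hp⟩
  have hinv : ∀ j : ℕ, ∃ x : ℤ_[n + 1], j < n → ((j : ℤ_[n + 1]) + 1) * x = 1 := by
    intro j
    by_cases hj : j < n
    · obtain ⟨x, hx⟩ := exists_padicInt_inv (n + 1) (j + 1)
        (Nat.not_dvd_of_pos_of_lt (by omega) (by omega))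
      exact ⟨x, fun _ => by exact_mod_cast hx⟩
    · exact ⟨0, fun h => absurd h hj⟩
  choose u hu using hinv
  obtain ⟨h, hh⟩ := exists_padicInt_inv (n + 1) 2
    (Nat.not_dvd_of_pos_of_lt (by omega) (by omega))
  obtain ⟨s, hs⟩ := exists_padicInt_inv (n + 1) 3
    (Nat.not_dvd_of_pos_of_lt (by omega) (by omega))
  obtain ⟨v, hv⟩ := exists_padicInt_inv (n + 1) (n + 1 + 1) (by
    rw [Nat.dvd_add_right (dvd_refl _)]
    exact Nat.not_dvd_of_pos_of_lt (by omega) (by omega))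
  set q : ℤ_[n + 1] := ((n + 1 : ℕ) : ℤ_[n + 1]) with hqdef
  have hv' : (q + 1) * v = 1 := by rw [hqdef]; exact_mod_cast hv
  -- `H₂` is divisible by `p` in `ℤ_[p]`
  have hH2 : q ∣ ∑ j ∈ Finset.range n, u j ^ 2 := by
    rw [← Ideal.mem_span_singleton, hqdef, ← PadicInt.maximalIdeal_eq_span_p,
      ← PadicInt.ker_toZMod, RingHom.mem_ker, map_sum, ← sum_inv_sq_zmod n hp3]
    refine Finset.sum_congr rfl fun j hj => ?_
    rw [map_pow]
    congr 1
    refine eq_inv_of_mul_eq_one_right ?_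
    have := congrArg (PadicInt.toZMod (p := n + 1)) (hu j (Finset.mem_range.1 hj))
    simpa using this
  have hdvd : ∑ k ∈ Finset.range (n + 1),
      (∏ j ∈ Finset.range k, (1 - q * v * u j)) ^ (n + 2) ∈ Ideal.span {q ^ 5} := by
    let φ := Ideal.Quotient.mk (Ideal.span {q ^ 5})
    have hφ : φ q ^ 5 = 0 := by
      rw [← map_pow]
      exact Ideal.Quotient.eq_zero_iff_mem.2 (Ideal.mem_span_singleton_self _)
    have := core (φ q) (φ v) (φ h) (φ s) (fun j => φ (u j)) n
      (by simp only [hqdef, Nat.cast_add, Nat.cast_one, map_add, map_natCast, map_one]) hφ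
      (by simpa only [map_mul, map_one, map_ofNat, Nat.cast_ofNat] using congrArg φ hh)
      (by simpa only [map_mul, map_one, map_ofNat, Nat.cast_ofNat] using congrArg φ hs)
      (by simpa only [map_mul, map_add, map_one] using congrArg φ hv')
      (fun j hj => by
        simpa only [map_mul, map_add, map_one, map_natCast] using congrArg φ (hu j hj))
      (by
        obtain ⟨t, ht⟩ := hH2
        have e : ∑ j ∈ Finset.range n, φ (u j) ^ 2 = φ q * φ t := by
          rw [← map_mul, ← ht]; simp
        rw [e]
        linear_combination φ t * hφ)
    rw [← Ideal.Quotient.eq_zero_iff_mem, ← this]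
    simp [φ]
  have hnorm := (PadicInt.norm_le_pow_iff_mem_span_pow _ 5).2 hdvd
  have hcoe : ((∑ k ∈ Finset.range (n + 1),
        (∏ j ∈ Finset.range k, (1 - q * v * u j)) ^ (n + 2) : ℤ_[n + 1]) : ℚ_[n + 1])
      = ((∑ k ∈ Finset.range (n + 1),
        ratChoose (-1 / (((n + 1 : ℕ) : ℚ) + 1)) k ^ (n + 1 + 1) : ℚ) : ℚ_[n + 1]) := by
    have heven : Even (n + 2) := by
      have := hp.odd_of_ne_two (by omega)
      exact this.add_one
    have hvc : (v : ℚ_[n + 1]) = ((n : ℚ_[n + 1]) + 1 + 1)⁻¹ := by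
      refine eq_inv_of_mul_eq_one_right ?_
      have := congrArg (fun x : ℤ_[n + 1] => (x : ℚ_[n + 1])) hv
      push_cast at this
      exact this
    have hne : (n : ℚ_[n + 1]) + 1 + 1 ≠ 0 := by exact_mod_cast Nat.succ_ne_zero (n + 1)
    rw [PadicInt.coe_sum, Rat.cast_sum]
    refine Finset.sum_congr rfl fun k hk => ?_
    rw [Finset.mem_range] at hk
    rw [PadicInt.coe_pow, Rat.cast_pow, ← Even.neg_pow heven, ← heven.neg_pow]
    have hterm : (((∏ j ∈ Finset.range k, (1 - q * v * u j) : ℤ_[n + 1])) : ℚ_[n + 1])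
        = (-1) ^ k * ((ratChoose (-1 / (((n + 1 : ℕ) : ℚ) + 1)) k : ℚ) : ℚ_[n + 1]) := by
      rw [ratChoose, Rat.cast_prod, ← Finset.card_range k, ← Finset.prod_const,
        Finset.card_range, ← Finset.prod_mul_distrib]
      refine (map_prod PadicInt.Coe.ringHom _ _).trans (Finset.prod_congr rfl fun j hj => ?_)
      rw [Finset.mem_range] at hj
      have huc : (u j : ℚ_[n + 1]) = ((j : ℚ_[n + 1]) + 1)⁻¹ := by
        refine eq_inv_of_mul_eq_one_right ?_
        have := congrArg (fun x : ℤ_[n + 1] => (x : ℚ_[n + 1])) (hu j (by omega))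
        push_cast at this
        exact this
      have hne' : (j : ℚ_[n + 1]) + 1 ≠ 0 := by exact_mod_cast Nat.succ_ne_zero j
      change ((1 - q * v * u j : ℤ_[n + 1]) : ℚ_[n + 1]) = _
      rw [hqdef]
      push_cast
      rw [hvc, huc]
      field_simp
      ring
    rw [hterm, heven.neg_pow, heven.neg_pow, mul_pow, ← pow_mul, mul_comm k, pow_mul,
      heven.neg_one_pow, one_pow, one_mul]
  rw [PadicInt.norm_def, hcoe, Padic.eq_padicNorm] at hnorm
  rw [← Rat.cast_le (K := ℝ), Rat.cast_zpow, Rat.cast_natCast]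
  exact hnorm
end

section
/- For any prime p > 3, ∑_{k=0}^{p-1} C(1/(p-1), k)^{p-1} ≡ (2/3) * p^4 * B_{p-3} (mod p^5), where B_{p-3} is the (p-3)-rd Bernoulli number; that is, the p-adic valuation of the rational number ∑_{k=0}^{p-1} C(1/(p-1), k)^{p-1} - (2/3) * p^4 * B_{p-3} is at least 5. -/
/-! ### Elementary expansions and finite sums -/

lemma exists_one_add_pow {R : Type*} [CommRing R] (y : R) (m : ℕ) :
    ∃ r, (1 + y) ^ m = 1 + m * y + m.choose 2 * y ^ 2 + m.choose 3 * y ^ 3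
      + m.choose 4 * y ^ 4 + y ^ 5 * r := by
  induction m with
  | zero => exact ⟨0, by simp⟩
  | succ m ih =>
    obtain ⟨r, hr⟩ := ih
    refine ⟨r * (1 + y) + m.choose 4, ?_⟩
    rw [pow_succ, hr, Nat.choose_succ_succ' m 1, Nat.choose_succ_succ' m 2,
      Nat.choose_succ_succ' m 3, Nat.choose_one_right]
    push_cast
    ring

lemma exists_add_pow {R : Type*} [CommRing R] (x y : R) (n : ℕ) :
    ∃ r, (x + y) ^ (n + 1) = x ^ (n + 1) + (n + 1) * x ^ n * y + y ^ 2 * r := by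
  induction n with
  | zero => exact ⟨0, by simp⟩
  | succ n ih =>
    obtain ⟨r, hr⟩ := ih
    refine ⟨r * (x + y) + (n + 1) * x ^ n, ?_⟩
    rw [pow_succ, hr]
    push_cast
    ring

lemma exists_prod_one_add {R : Type*} [CommRing R] (c : R) (y : ℕ → R) (n : ℕ) :
    ∃ z, ∏ j ∈ Finset.range n, (1 + c * y j) = 1 + c * ∑ j ∈ Finset.range n, y j + c ^ 2 * z := by
  induction n with
  | zero => exact ⟨0, by simp⟩
  | succ n ih =>
    obtain ⟨z, hz⟩ := ih
    refine ⟨z * (1 + c * y n) + (∑ j ∈ Finset.range n, y j) * y n, ?_⟩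
    rw [Finset.prod_range_succ, hz, Finset.sum_range_succ]
    ring

/-- Folding the indices `1, …, 2h` by the reflection `k ↦ 2h + 1 - k`. -/
lemma sum_pair {R : Type*} [CommRing R] (f : ℕ → R) (h : ℕ) :
    ∑ i ∈ Finset.range (2 * h), f (i + 1)
      = ∑ i ∈ Finset.range h, (f (i + 1) + f (2 * h + 1 - (i + 1))) := by
  rw [two_mul, Finset.sum_range_add, Finset.sum_add_distrib]
  congr 1
  rw [← Finset.sum_range_reflect]
  refine Finset.sum_congr rfl fun i hi => ?_
  have := Finset.mem_range.1 hi
  congr 1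
  omega

/-- Folding the indices `1, …, 2h` by reflection, with the even numbers as representatives. -/
lemma sum_even_pair {R : Type*} [CommRing R] (f : ℕ → R) (h : ℕ) :
    ∑ i ∈ Finset.range (2 * h), f (i + 1)
      = ∑ i ∈ Finset.range h, (f (2 * (i + 1)) + f (2 * h + 1 - 2 * (i + 1))) := by
  have key : ∑ i ∈ Finset.range (2 * h), f (i + 1)
      = ∑ i ∈ Finset.range h, f (2 * (i + 1)) + ∑ i ∈ Finset.range h, f (2 * i + 1) := by
    induction h with
    | zero => simp
    | succ n ih =>
      rw [show 2 * (n + 1) = 2 * n + 1 + 1 by ring, Finset.sum_range_succ, Finset.sum_range_succ,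
        ih, Finset.sum_range_succ, Finset.sum_range_succ]
      ring_nf
  rw [key, Finset.sum_add_distrib]
  congr 1
  rw [← Finset.sum_range_reflect]
  refine Finset.sum_congr rfl fun i hi => ?_
  have := Finset.mem_range.1 hi
  congr 1
  omega

lemma cast_fermat {R : Type*} [CommRing R] {p : ℕ} (hp : p.Prime) {k : ℕ} (h0 : 0 < k)
    (hk : k < p) : (p : R) ∣ (k : R) ^ (p - 1) - 1 := by
  have h : (p : ℤ) ∣ (k : ℤ) ^ (p - 1) - 1 := by
    refine (Int.ModEq.pow_card_sub_one_eq_one hp ?_).symm.dvd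
    exact Nat.isCoprime_iff_coprime.2
      (hp.coprime_iff_not_dvd.2 fun hd => absurd (Nat.le_of_dvd h0 hd) (by omega)).symm
  simpa using map_dvd (Int.castRingHom R) h

/-- `1/k + 1/(p-k) = p / (k(p-k))`, where `iv k` plays the role of `1/k`. -/
lemma inv_reflect {R : Type*} [CommRing R] {p : ℕ} {iv : ℕ → R}
    (hiv : ∀ k, 0 < k → k < p → (k : R) * iv k = 1) {k : ℕ} (h0 : 0 < k) (hk : k < p) :
    iv k + iv (p - k) = p * (iv k * iv (p - k)) := by
  have h1 := hiv k h0 hk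
  have h2 := hiv (p - k) (by omega) (by omega)
  rw [Nat.cast_sub hk.le] at h2
  linear_combination (-iv (p - k)) * h1 - iv k * h2

/-! ### Harmonic sums and the main computation -/

/-- If `∑ k^(p-3) ≡ p b (mod p²)`, then `3 ∑ 1/k² ≡ 2 p b (mod p²)`, the sums running over
`0 < k < p`. This is the instance of Kummer's congruence that the proof needs.

The function `f k = 3/k² - 2k^(p-3)` is invariant under `k ↦ p - k` modulo `p²`, because the
first-order terms `2p/k³` and `3p/k³` of its two parts are in the ratio `2 : 3`. Folding `∑ f` by
reflection onto `1, …, (p-1)/2`, and onto the even numbers, gives two expressions whose ratio is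
`1/4` modulo `p²`; hence `∑ f ≡ 0`. -/
lemma sum_inv_sq {R : Type*} [CommRing R] {p : ℕ} (hp : p.Prime) (hp3 : 3 < p)
    {iv : ℕ → R} (hiv : ∀ k, 0 < k → k < p → (k : R) * iv k = 1) {b : R}
    (hb : (p : R) ^ 2 ∣ ∑ i ∈ Finset.range (p - 1), ((i + 1 : ℕ) : R) ^ (p - 3) - p * b) :
    (p : R) ^ 2 ∣ 3 * ∑ i ∈ Finset.range (p - 1), iv (i + 1) ^ 2 - 2 * (p * b) := by
  obtain ⟨h, hh⟩ := hp.odd_of_ne_two (by omega)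
  have hN : p - 1 = 2 * h := by omega
  have h2 : (2 : R) * iv 2 = 1 := by exact_mod_cast hiv 2 (by omega) (by omega)
  have h3 : (3 : R) * iv 3 = 1 := by exact_mod_cast hiv 3 (by omega) (by omega)
  have hf1 : ∀ k, 0 < k → k < p →
      (p : R) ^ 2 ∣ iv (p - k) ^ 2 - iv k ^ 2 - 2 * p * iv k ^ 3 := by
    intro k h0 hk
    have e := inv_reflect hiv h0 hk
    have e2 : iv (p - k) = -iv k - p * iv k ^ 2 + p ^ 2 * (iv k ^ 2 * iv (p - k)) := by
      linear_combination (1 + p * iv k) * e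
    set y := iv (p - k)
    refine ⟨iv k ^ 4 + (y - iv k - p * iv k ^ 2) * (iv k ^ 2 * y), ?_⟩
    linear_combination (y - iv k - p * iv k ^ 2) * e2
  have hf2 : ∀ k, 0 < k → k < p →
      (p : R) ^ 2 ∣ ((p - k : ℕ) : R) ^ (p - 3) - (k : R) ^ (p - 3) - 3 * p * iv k ^ 3 := by
    intro k h0 hk
    have e := hiv k h0 hk
    obtain ⟨z, hz⟩ := cast_fermat (R := R) hp h0 hk
    have ev : Even (p - 3) := ⟨h - 1, by omega⟩
    have e4 : (k : R) ^ (p - 4) = iv k ^ 3 + p * (z * iv k ^ 3) := by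
      rw [show p - 1 = p - 4 + 3 by omega, pow_add] at hz
      have e3 : (k : R) ^ 3 * iv k ^ 3 = 1 := by rw [← mul_pow, e, one_pow]
      linear_combination iv k ^ 3 * hz - (k : R) ^ (p - 4) * e3
    obtain ⟨r, hr⟩ := exists_add_pow (k : R) (-p) (p - 4)
    have e5 : ((p - k : ℕ) : R) ^ (p - 3) = ((k : R) + -p) ^ (p - 4 + 1) := by
      rw [Nat.cast_sub hk.le, ← ev.neg_pow, show p - 4 + 1 = p - 3 by omega]
      congr 1
      ring
    have e6 : ((p - 4 : ℕ) : R) = p - 4 := by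
      rw [Nat.cast_sub (by omega)]; norm_num
    rw [e5, hr, e6, e4, show p - 4 + 1 = p - 3 by omega]
    exact ⟨-(iv k ^ 3 + p * (z * iv k ^ 3)) + 3 * (z * iv k ^ 3) + r, by ring⟩
  set f2 : ℕ → R := fun k => (k : R) ^ (p - 3) with hf2d
  set f : ℕ → R := fun k => 3 * iv k ^ 2 - 2 * f2 k with hfd
  have hf : ∀ k, 0 < k → k < p → (p : R) ^ 2 ∣ f (p - k) - f k := by
    intro k h0 hk
    have := dvd_sub ((hf1 k h0 hk).mul_left 3) ((hf2 k h0 hk).mul_left 2)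
    convert this using 1
    simp only [hfd, hf2d]
    ring
  -- Doubling multiplies `f` by `1/4`, up to an error `p t k^(p-3)` that sums to `0` modulo `p²`.
  obtain ⟨t, ht⟩ : ∃ t, ∀ k, 0 < k → 2 * k < p → f (2 * k) = iv 2 ^ 2 * f k + p * t * f2 k := by
    obtain ⟨z, hz⟩ := cast_fermat (R := R) hp (k := 2) (by omega) (by omega)
    refine ⟨-2 * iv 2 ^ 2 * z, fun k h0 hk => ?_⟩
    have e := hiv k h0 (by omega)
    have e' := hiv (2 * k) (by omega) hk
    push_cast at e' hz
    have e1 : iv (2 * k) = iv 2 * iv k := by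
      linear_combination (-iv (2 * k)) * h2 - 2 * iv 2 * iv (2 * k) * e + iv 2 * iv k * e'
    have e2 : (2 : R) ^ (p - 3) = iv 2 ^ 2 * (1 + p * z) := by
      rw [show p - 1 = p - 3 + 2 by omega, pow_add] at hz
      linear_combination iv 2 ^ 2 * hz - 2 ^ (p - 3) * (2 * iv 2 + 1) * h2
    simp only [hfd, hf2d]
    push_cast
    rw [e1, mul_pow, mul_pow, e2]
    ring
  rw [hN] at hb ⊢
  set F := ∑ i ∈ Finset.range h, f (i + 1) with hF
  set F2 := ∑ i ∈ Finset.range h, f2 (i + 1) with hF2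
  have s1 : (p : R) ^ 2 ∣ ∑ i ∈ Finset.range (2 * h), f (i + 1) - 2 * F := by
    rw [sum_pair, hF, Finset.mul_sum, ← Finset.sum_sub_distrib]
    refine Finset.dvd_sum fun i hi => ?_
    have := Finset.mem_range.1 hi
    convert hf (i + 1) (by omega) (by omega) using 1
    rw [← hh]
    ring
  have s2 : (p : R) ^ 2 ∣ ∑ i ∈ Finset.range (2 * h), f (i + 1)
      - 2 * (iv 2 ^ 2 * F + p * t * F2) := by
    rw [sum_even_pair, hF, hF2, Finset.mul_sum, Finset.mul_sum, ← Finset.sum_add_distrib,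
      Finset.mul_sum, ← Finset.sum_sub_distrib]
    refine Finset.dvd_sum fun i hi => ?_
    have := Finset.mem_range.1 hi
    convert hf (2 * (i + 1)) (by omega) (by omega) using 1
    rw [← ht (i + 1) (by omega) (by omega), ← hh]
    ring
  have s3 : (p : R) ∣ ∑ i ∈ Finset.range (2 * h), f2 (i + 1) - 2 * F2 := by
    rw [sum_pair, hF2, Finset.mul_sum, ← Finset.sum_sub_distrib]
    refine Finset.dvd_sum fun i hi => ?_
    have := Finset.mem_range.1 hi
    obtain ⟨r, hr⟩ := hf2 (i + 1) (by omega) (by omega)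
    refine ⟨3 * iv (i + 1) ^ 3 + p * r, ?_⟩
    rw [← hh]
    simp only [hf2d]
    linear_combination hr
  have s4 : ∑ i ∈ Finset.range (2 * h), f (i + 1)
      = 3 * ∑ i ∈ Finset.range (2 * h), iv (i + 1) ^ 2
        - 2 * ∑ i ∈ Finset.range (2 * h), f2 (i + 1) := by
    simp only [hfd, Finset.sum_sub_distrib, Finset.mul_sum]
  change (p : R) ^ 2 ∣ ∑ i ∈ Finset.range (2 * h), f2 (i + 1) - p * b at hb
  set X := ∑ i ∈ Finset.range (2 * h), f (i + 1)
  set X2 := ∑ i ∈ Finset.range (2 * h), f2 (i + 1)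
  obtain ⟨z1, hz1⟩ := s1
  obtain ⟨z2, hz2⟩ := s2
  obtain ⟨z3, hz3⟩ := s3
  obtain ⟨zb, hzb⟩ := hb
  have hF2' : 2 * F2 = p * (b + p * zb - z3) := by linear_combination hzb - hz3
  have hX : 3 * X = p ^ 2 * (4 * z2 - z1 + 4 * t * (b + p * zb - z3)) := by
    linear_combination 4 * hz2 - hz1 + 4 * p * t * hF2' + 2 * F * (2 * iv 2 + 1) * h2
  refine ⟨iv 3 * (4 * z2 - z1 + 4 * t * (b + p * zb - z3)) + 2 * zb, ?_⟩
  linear_combination iv 3 * hX - X * h3 - s4 + 2 * hzb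

/-- The congruence in an abstract domain `R` in which `1, …, p-1` and `1-p` are invertible, with
inverses `iv k` and `u`; the element `b` stands for `B_{p-3}`. -/
theorem core_s2 {R : Type*} [CommRing R] [IsDomain R] {p : ℕ} (hp : p.Prime) (hp3 : 3 < p)
    (hp0 : (p : R) ≠ 0) {iv : ℕ → R} (hiv : ∀ k, 0 < k → k < p → (k : R) * iv k = 1) {b : R}
    (hb : (p : R) ^ 2 ∣ ∑ i ∈ Finset.range (p - 1), ((i + 1 : ℕ) : R) ^ (p - 3) - p * b)
    {u : R} (hu : u * (1 - p) = 1) :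
    (p : R) ^ 5 ∣ 3 * ∑ k ∈ Finset.range p,
      (∏ j ∈ Finset.range k, (1 + p * u * iv (j + 1))) ^ (p - 1) - 2 * p ^ 4 * b := by
  obtain ⟨h, hh⟩ := hp.odd_of_ne_two (by omega)
  obtain ⟨N, rfl⟩ : ∃ N, p = N + 1 := ⟨p - 1, by omega⟩
  have hN : N = 2 * h := by omega
  obtain ⟨zH2, hzH2⟩ := sum_inv_sq hp hp3 hiv hb
  clear hb
  have h2 : (2 : R) * iv 2 = 1 := by exact_mod_cast hiv 2 (by omega) (by omega)
  have h3 : (3 : R) * iv 3 = 1 := by exact_mod_cast hiv 3 (by omega) (by omega)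
  rw [Nat.add_sub_cancel] at *
  generalize hP : ((N + 1 : ℕ) : R) = P at *
  have hNR : (N : R) = P - 1 := by rw [← hP]; push_cast; ring
  have hhR : 2 * (h : R) = P - 1 := by rw [← hNR, hN]; push_cast; ring
  set x : ℕ → R := fun j => iv (j + 1) with hx
  set x' : ℕ → R := fun j => iv (N - j) with hx'
  have hxx : ∀ j ∈ Finset.range N, x j + x' j = P * (x j * x' j) := by
    intro j hj
    have := Finset.mem_range.1 hj
    have := inv_reflect hiv (k := j + 1) (by omega) (by omega)
    rw [hP, show N + 1 - (j + 1) = N - j by omega] at this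
    exact this
  have hrefl : ∀ g : R → R, ∑ j ∈ Finset.range N, g (x' j) = ∑ j ∈ Finset.range N, g (x j) := by
    intro g
    rw [← Finset.sum_range_reflect]
    refine Finset.sum_congr rfl fun j hj => ?_
    have := Finset.mem_range.1 hj
    simp only [hx, hx']
    congr 2
    omega
  set H := ∑ j ∈ Finset.range N, x j with hH
  set H2 := ∑ j ∈ Finset.range N, x j ^ 2 with hH2
  set H3 := ∑ j ∈ Finset.range N, x j ^ 3 with hH3
  set W := ∑ j ∈ Finset.range N, x j * x' j with hW
  -- `2H ≡ -p H₂ (mod p³)`, by pairing `k` with `p - k` (the terms `p²H₃` vanish modulo `p³`).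
  have hHW : 2 * H = P * W := by
    have e : H + H = P * W := by
      nth_rewrite 1 [hH]
      rw [← hrefl fun y => y, ← Finset.sum_add_distrib, hW, Finset.mul_sum]
      exact Finset.sum_congr rfl fun j hj => by rw [add_comm]; exact hxx j hj
    linear_combination e
  obtain ⟨V, hV⟩ : ∃ V, W = -H2 - P * H3 + P ^ 2 * V := by
    refine ⟨∑ j ∈ Finset.range N, x j ^ 3 * x' j, ?_⟩
    rw [hW, hH2, hH3, Finset.mul_sum, Finset.mul_sum, ← Finset.sum_neg_distrib,
      ← Finset.sum_sub_distrib, ← Finset.sum_add_distrib]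
    refine Finset.sum_congr rfl fun j hj => ?_
    linear_combination (x j + P * x j ^ 2) * hxx j hj
  obtain ⟨g3, hg3⟩ : P ∣ H3 := by
    have e : P ∣ 2 * H3 := by
      have : 2 * H3 = ∑ j ∈ Finset.range N, (x j ^ 3 + x' j ^ 3) := by
        rw [Finset.sum_add_distrib, hrefl fun y => y ^ 3]; ring
      rw [this]
      refine Finset.dvd_sum fun j hj => ?_
      refine ⟨(x j * x' j) * (x j ^ 2 - x j * x' j + x' j ^ 2), ?_⟩
      linear_combination (x j ^ 2 - x j * x' j + x' j ^ 2) * hxx j hj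
    obtain ⟨z, hz⟩ := e
    exact ⟨iv 2 * z, by linear_combination iv 2 * hz - H3 * h2⟩
  obtain ⟨g2, hg2⟩ : P ∣ H2 :=
    ⟨iv 3 * (2 * b + P * zH2), by linear_combination iv 3 * hzH2 - H2 * h3⟩
  obtain ⟨η, hη⟩ : P ^ 2 ∣ H :=
    ⟨iv 2 * (-g2 - P * g3 + P * V), by
      linear_combination iv 2 * hHW + iv 2 * P * hV - iv 2 * P * hg2 - iv 2 * P ^ 2 * hg3 - H * h2⟩
  have hu1 : u = 1 + P * u := by linear_combination hu
  -- `a k` is the `k`-th term of the sum; it is `1` modulo `p`.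
  set A : ℕ → R := fun k => ∏ j ∈ Finset.range k, (1 + P * u * x j) with hA
  set a : ℕ → R := fun k => A k ^ N with ha
  have ha1 : ∀ k, ∃ y, a k = 1 + P * y := by
    intro k
    obtain ⟨z, hz⟩ := exists_prod_one_add (P * u) x k
    obtain ⟨r, hr⟩ := sub_dvd_pow_sub_pow (A k) 1 N
    refine ⟨(u * ∑ j ∈ Finset.range k, x j + P * u ^ 2 * z) * r, ?_⟩
    simp only [ha]
    rw [one_pow] at hr
    have hz' : A k = _ := hz
    linear_combination hr + r * hz'
  choose y hy using ha1
  -- The last term: reflection turns `A N ^ 2` into a product of factors `1 + O(p²)`, so it is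
  -- known modulo `p⁴`, and `N` is even.
  obtain ⟨Z3, hZ3⟩ : ∃ Z3, a N = 1 - 2 * P * H + P ^ 4 * Z3 := by
    have e1 : A N ^ 2 = ∏ j ∈ Finset.range N, (1 + P ^ 2 * (u + u ^ 2) * (x j * x' j)) := by
      have : A N = ∏ j ∈ Finset.range N, (1 + P * u * x' j) := by
        simp only [hA]
        rw [← Finset.prod_range_reflect]
        refine Finset.prod_congr rfl fun j hj => ?_
        have := Finset.mem_range.1 hj
        simp only [hx, hx']
        congr 3
        omega
      rw [sq]
      nth_rewrite 2 [this]
      rw [hA, ← Finset.prod_mul_distrib]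
      refine Finset.prod_congr rfl fun j hj => ?_
      linear_combination P * u * hxx j hj
    obtain ⟨z, hz⟩ := exists_prod_one_add (P ^ 2 * (u + u ^ 2)) (fun j => x j * x' j) N
    rw [← e1] at hz
    change A N ^ 2 = 1 + P ^ 2 * (u + u ^ 2) * W + _ at hz
    set z' := 2 * (2 * u + u ^ 2) * η + (u + u ^ 2) ^ 2 * z
    have e2 : A N ^ 2 = 1 + P ^ 3 * (4 * η + P * z') := by
      linear_combination hz - P * (u + u ^ 2) * hHW + 2 * P * (u + u ^ 2) * hη
        + 2 * P ^ 3 * η * (u + 2) * hu1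
    obtain ⟨r, hr⟩ := exists_one_add_pow (P ^ 3 * (4 * η + P * z')) h
    rw [← e2, ← pow_mul, ← hN] at hr
    set Y := 4 * η + P * z'
    refine ⟨2 * η + h * z' + P ^ 2 * Y ^ 2 * (h.choose 2 + h.choose 3 * (P ^ 3 * Y)
      + h.choose 4 * (P ^ 3 * Y) ^ 2 + (P ^ 3 * Y) ^ 3 * r), ?_⟩
    simp only [ha]
    linear_combination hr + 2 * P ^ 3 * η * hhR + 2 * P * hη
  -- `C(p-1, 2) ≡ 1` and `C(p-1, 3) ≡ -1` modulo `p`.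
  obtain ⟨c2, hc2⟩ : ∃ c, (N.choose 2 : R) = 1 + P * c := by
    have e : (2 : R) * N.choose 2 = N * (N - 1) := by
      have := Nat.choose_succ_right_eq N 1
      rw [Nat.choose_one_right] at this
      have h' : ((N.choose 2 * 2 : ℕ) : R) = ((N * (N - 1) : ℕ) : R) := by rw [this]
      push_cast [Nat.cast_sub (show 1 ≤ N by omega)] at h'
      linear_combination h'
    rw [hNR] at e
    exact ⟨iv 2 * (P - 3), by linear_combination iv 2 * e - (N.choose 2 - 1 : R) * h2⟩
  obtain ⟨c3, hc3⟩ : ∃ c, (N.choose 3 : R) = -1 + P * c := by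
    have e : (3 : R) * N.choose 3 = N.choose 2 * (N - 2) := by
      have := Nat.choose_succ_right_eq N 2
      have h' : ((N.choose 3 * 3 : ℕ) : R) = ((N.choose 2 * (N - 2) : ℕ) : R) := by rw [this]
      push_cast [Nat.cast_sub (show 2 ≤ N by omega)] at h'
      linear_combination h'
    rw [hNR, hc2] at e
    exact ⟨iv 3 * (1 + c2 * (P - 3)), by linear_combination iv 3 * e - (N.choose 3 + 1 : R) * h3⟩
  set C2 : R := ((N.choose 2 : ℕ) : R)
  set C3 : R := ((N.choose 3 : ℕ) : R)
  set C4 : R := ((N.choose 4 : ℕ) : R)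
  have hstep : ∀ j, ∃ r, a (j + 1) = a j * (1 + (P - 1) * (P * u * x j) + C2 * (P * u * x j) ^ 2
      + C3 * (P * u * x j) ^ 3 + C4 * (P * u * x j) ^ 4 + (P * u * x j) ^ 5 * r) := by
    intro j
    obtain ⟨r, hr⟩ := exists_one_add_pow (P * u * x j) N
    refine ⟨r, ?_⟩
    rw [hNR] at hr
    rw [← hr]
    simp only [ha, hA, Finset.prod_range_succ, mul_pow]
  choose r hr using hstep
  set T1 := ∑ j ∈ Finset.range N, a j * x j with hT1
  set T2 := ∑ j ∈ Finset.range N, a j * x j ^ 2 with hT2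
  set T3 := ∑ j ∈ Finset.range N, a j * x j ^ 3 with hT3
  set S' := ∑ j ∈ Finset.range N, a j with hS'
  have ha0 : a 0 = 1 := by simp [ha, hA]
  -- Telescoping `a (k+1) - a k` expresses `T1` through the last term and `T2`; the linear
  -- coefficient `(p-1)·pu` is exactly `-p`.
  obtain ⟨Z2, hZ2⟩ : ∃ Z2, a N - 1 = -P * T1 + C2 * (P * u) ^ 2 * T2 + C3 * (P * u) ^ 3 * T3
      + (P * u) ^ 4 * Z2 := by
    refine ⟨∑ j ∈ Finset.range N, a j * (C4 * x j ^ 4 + P * u * x j ^ 5 * r j), ?_⟩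
    rw [← ha0, ← Finset.sum_range_sub, hT1, hT2, hT3, Finset.mul_sum, Finset.mul_sum,
      Finset.mul_sum, Finset.mul_sum, ← Finset.sum_add_distrib, ← Finset.sum_add_distrib,
      ← Finset.sum_add_distrib]
    refine Finset.sum_congr rfl fun j _ => ?_
    linear_combination hr j - P * a j * x j * hu
  -- Telescoping `k * a k`. Since `(j+1) x j = 1`, the linear term contributes `-p S'`, and the
  -- higher terms contribute the sums `T1`, `T2`, `T3`.
  obtain ⟨Z1, hZ1⟩ : ∃ Z1, N * a N = (1 - P) * S' + C2 * (P * u) ^ 2 * T1 + C3 * (P * u) ^ 3 * T2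
      + C4 * (P * u) ^ 4 * T3 + (P * u) ^ 5 * Z1 := by
    refine ⟨∑ j ∈ Finset.range N, a j * (x j ^ 4 * r j), ?_⟩
    have e : (N : R) * a N = (N : R) * a N - ((0 : ℕ) : R) * a 0 := by simp
    rw [e, ← Finset.sum_range_sub (fun k => (k : R) * a k), hS', hT1, hT2, hT3, Finset.mul_sum,
      Finset.mul_sum, Finset.mul_sum, Finset.mul_sum, Finset.mul_sum, ← Finset.sum_add_distrib,
      ← Finset.sum_add_distrib, ← Finset.sum_add_distrib, ← Finset.sum_add_distrib]
    refine Finset.sum_congr rfl fun j hj => ?_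
    have hj' := Finset.mem_range.1 hj
    have e1 := hiv (j + 1) (by omega) (by omega)
    change _ * x j = 1 at e1
    push_cast at e1 ⊢
    linear_combination ((j : R) + 1) * hr j - P * a j * hu
      + a j * ((P - 1) * (P * u) + C2 * (P * u) ^ 2 * x j + C3 * (P * u) ^ 3 * x j ^ 2
        + C4 * (P * u) ^ 4 * x j ^ 3 + (P * u) ^ 5 * x j ^ 4 * r j) * e1
  obtain ⟨t2, ht2⟩ : P ∣ T2 := by
    have : T2 = H2 + P * ∑ j ∈ Finset.range N, y j * x j ^ 2 := by
      rw [hT2, hH2, Finset.mul_sum, ← Finset.sum_add_distrib]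
      exact Finset.sum_congr rfl fun j _ => by rw [hy]; ring
    exact ⟨g2 + ∑ j ∈ Finset.range N, y j * x j ^ 2, by rw [this, hg2]; ring⟩
  obtain ⟨t3, ht3⟩ : P ∣ T3 := by
    have : T3 = H3 + P * ∑ j ∈ Finset.range N, y j * x j ^ 3 := by
      rw [hT3, hH3, Finset.mul_sum, ← Finset.sum_add_distrib]
      exact Finset.sum_congr rfl fun j _ => by rw [hy]; ring
    exact ⟨g3 + ∑ j ∈ Finset.range N, y j * x j ^ 3, by rw [this, hg3]; ring⟩
  rw [Finset.sum_range_succ]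
  change P ^ 5 ∣ 3 * (S' + a N) - 2 * P ^ 4 * b
  set S := S' + a N with hS
  clear_value S T1 T2 T3 H H2 H3 W a C2 C3 C4
  subst ht2 ht3
  -- `u²C₂ = 1 + pκ` and `u³C₃ = -1 + pl`
  set κ := u * (1 + u) + c2 * u ^ 2
  have hκ : C2 * u ^ 2 = 1 + P * κ := by
    linear_combination u ^ 2 * hc2 + (1 + u) * hu1
  set l := c3 * u ^ 3 - u * (1 + u + u ^ 2)
  have hl : C3 * u ^ 3 = -1 + P * l := by
    linear_combination u ^ 3 * hc3 - (1 + u + u ^ 2) * hu1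
  set X := -Z3 + κ * t2 + C3 * u ^ 3 * t3 + u ^ 4 * Z2
  have hTX : T1 = 2 * H + P ^ 2 * t2 + P ^ 3 * X := by
    apply mul_left_cancel₀ hp0
    linear_combination hZ2 - hZ3 + P ^ 3 * t2 * hκ
  -- Substituting `T1` here, the two occurrences of `p⁴ t2 = p³ T2` cancel.
  set Y := X + κ * (2 * η + t2 + P * X) + l * t2 + C4 * u ^ 4 * t3 + u ^ 5 * Z1
  have hSY : (1 - P) * S = -2 * P ^ 2 * H - P ^ 5 * Y := by
    linear_combination (1 - P) * hS - hZ1 + a N * hNR - P ^ 2 * T1 * hκ - P ^ 4 * t2 * hl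
      - P ^ 2 * (1 + P * κ) * hTX - 2 * P ^ 3 * κ * hη
  have hSH : S = -2 * P ^ 2 * H - P ^ 5 * (2 * u * η + u * Y) := by
    linear_combination u * hSY - S * hu - 2 * P ^ 2 * H * hu1 - 2 * P ^ 3 * u * hη
  refine ⟨-3 * (2 * u * η + u * Y) + zH2 + 3 * g3 - 3 * V, ?_⟩
  linear_combination 3 * hSH - 3 * P ^ 2 * hHW - 3 * P ^ 3 * hV + P ^ 3 * hzH2 + 3 * P ^ 4 * hg3

/-! ### Bernoulli numbers as `p`-adic integers -/

section Padic

variable {p : ℕ} [Fact p.Prime]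

lemma natCast_inv_mem {k : ℕ} (h0 : 0 < k) (hk : k < p) :
    ((k : ℚ_[p])⁻¹) ∈ PadicInt.subring p := by
  have : ‖(k : ℚ_[p])‖ = 1 := by
    rw [Padic.norm_natCast_eq_one_iff, Nat.Prime.coprime_iff_not_dvd Fact.out]
    exact fun hd => absurd (Nat.le_of_dvd h0 hd) (by omega)
  change ‖_‖ ≤ 1
  rw [norm_inv, this, inv_one]

/-- `B_n` is `p`-integral for `n < p - 1`: the recursion for `B_n` only divides by integers
`≤ n + 1 < p`. -/
lemma bernoulli'_mem (n : ℕ) (hn : n + 1 < p) :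
    ((bernoulli' n : ℚ) : ℚ_[p]) ∈ PadicInt.subring p := by
  induction n using Nat.strong_induction_on with
  | _ n ih =>
    rw [bernoulli'_def]
    push_cast
    refine sub_mem (one_mem _) (sum_mem fun k hk => mul_mem ?_ ?_)
    · have hk' := Finset.mem_range.1 hk
      rw [div_eq_mul_inv]
      refine mul_mem (natCast_mem _ _) ?_
      have := natCast_inv_mem (p := p) (k := n - k + 1) (by omega) (by omega)
      rwa [Nat.cast_add, Nat.cast_sub hk'.le, Nat.cast_one] at this
    · have hk' := Finset.mem_range.1 hk
      exact ih k hk' (by omega)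

lemma bernoulli_mem (n : ℕ) (hn : n + 1 < p) :
    ((bernoulli n : ℚ) : ℚ_[p]) ∈ PadicInt.subring p := by
  rw [bernoulli]
  push_cast
  exact mul_mem (pow_mem (neg_mem (one_mem _)) _) (bernoulli'_mem n hn)

/-- `∑_{0<k<p} k^(p-3) ≡ p B_{p-3} (mod p²)`: in Faulhaber's formula every other term carries a
factor `p²`, and the only denominator is `p - 2`. -/
lemma sum_pow_congr (hp3 : 3 < p) {b : ℤ_[p]} (hb : (b : ℚ_[p]) = (bernoulli (p - 3) : ℚ))
    {i2 : ℤ_[p]} (hi : ((p - 2 : ℕ) : ℤ_[p]) * i2 = 1) :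
    (p : ℤ_[p]) ^ 2 ∣ ∑ i ∈ Finset.range (p - 1), ((i + 1 : ℕ) : ℤ_[p]) ^ (p - 3) - p * b := by
  obtain ⟨n, hn⟩ : ∃ n, p = n + 3 := ⟨p - 3, by omega⟩
  have e1 : p - 3 = n := by omega
  have e2 : p - 2 = n + 1 := by omega
  rw [e1] at hb ⊢
  rw [e2] at hi
  have hB : ∀ i, ∃ z : ℤ_[p], i ≤ n → (z : ℚ_[p]) = (bernoulli i : ℚ) := by
    intro i
    by_cases h : i ≤ n
    · exact ⟨⟨_, bernoulli_mem i (by omega)⟩, fun _ => rfl⟩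
    · exact ⟨0, fun h' => absurd h' h⟩
  choose B hB using hB
  have key : ((n + 1 : ℕ) : ℤ_[p]) * ∑ i ∈ Finset.range (p - 1), ((i + 1 : ℕ) : ℤ_[p]) ^ n
      = ∑ i ∈ Finset.range (n + 1), B i * ((n + 1).choose i : ℕ) * (p : ℤ_[p]) ^ (n + 1 - i) := by
    have hF := sum_range_pow p n
    rw [← Finset.sum_div, eq_div_iff (by positivity)] at hF
    nth_rewrite 1 [show p = p - 1 + 1 by omega] at hF
    rw [Finset.sum_range_succ', Nat.cast_zero, zero_pow (by omega), add_zero] at hF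
    have hF' := congrArg (fun x : ℚ => (x : ℚ_[p])) hF
    apply PadicInt.ext
    push_cast [PadicInt.coe_sum] at hF' ⊢
    rw [mul_comm, hF']
    refine Finset.sum_congr rfl fun i hi => ?_
    rw [hB i (by have := Finset.mem_range.1 hi; omega)]
  rw [Finset.sum_range_succ, Nat.choose_succ_self_right, Nat.add_sub_cancel_left, pow_one] at key
  have hBn : B n = b := by
    apply PadicInt.ext
    rw [hB n le_rfl, hb]
  have hd : (p : ℤ_[p]) ^ 2 ∣ ∑ i ∈ Finset.range n,
      B i * ((n + 1).choose i : ℕ) * (p : ℤ_[p]) ^ (n + 1 - i) := by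
    refine Finset.dvd_sum fun i hi => Dvd.dvd.mul_left (pow_dvd_pow _ ?_) _
    have := Finset.mem_range.1 hi
    omega
  obtain ⟨z, hz⟩ := hd
  rw [hz, hBn] at key
  set X := ∑ i ∈ Finset.range (p - 1), ((i + 1 : ℕ) : ℤ_[p]) ^ n
  exact ⟨i2 * z, by linear_combination i2 * key - (X - p * b) * hi⟩

end Padic

/-- `C(1/(p-1), k) = (-1)^k ∏_{j=1}^k (1 + q/j)` with `q = p/(1-p)`. -/
lemma ratChoose_eq {p : ℕ} (hp3 : 3 < p) (k : ℕ) :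
    ratChoose (1 / ((p : ℚ) - 1)) k
      = (-1) ^ k * ∏ j ∈ Finset.range k, (1 + p * (1 - (p : ℚ))⁻¹ * ((j + 1 : ℕ) : ℚ)⁻¹) := by
  have h : (1 : ℚ) < p := by exact_mod_cast (show 1 < p by omega)
  have h1 : (p : ℚ) - 1 ≠ 0 := by linarith
  have h1' : 1 - (p : ℚ) ≠ 0 := by linarith
  rw [ratChoose, ← Finset.card_range k, ← Finset.prod_const, Finset.card_range,
    ← Finset.prod_mul_distrib]
  refine Finset.prod_congr rfl fun j _ => ?_
  have h2 : (j : ℚ) + 1 ≠ 0 := by positivity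
  push_cast
  field_simp
  ring

theorem stmt2 (p : ℕ) (hp : p.Prime) (hp3 : 3 < p) :
    padicNorm p ((∑ k ∈ Finset.range p, ratChoose (1 / ((p : ℚ) - 1)) k ^ (p - 1))
        - (2 / 3) * (p : ℚ) ^ 4 * bernoulli (p - 3))
      ≤ (p : ℚ) ^ (-(5 : ℤ)) := by
  have : Fact p.Prime := ⟨hp⟩
  have hiv : ∀ k : ℕ, ∃ z : ℤ_[p], 0 < k → k < p → (z : ℚ_[p]) = (k : ℚ_[p])⁻¹ := by
    intro k
    by_cases h : 0 < k ∧ k < p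
    · exact ⟨⟨_, natCast_inv_mem h.1 h.2⟩, fun _ _ => rfl⟩
    · exact ⟨0, fun h1 h2 => absurd ⟨h1, h2⟩ h⟩
  choose iv hivc using hiv
  have hiv : ∀ k, 0 < k → k < p → (k : ℤ_[p]) * iv k = 1 := by
    intro k h0 hk
    apply PadicInt.ext
    push_cast
    rw [hivc k h0 hk]
    exact mul_inv_cancel₀ (by exact_mod_cast h0.ne')
  have hpow : ((-1 : ℚ)) ^ (p - 1) = 1 := (hp.even_sub_one (by omega)).neg_one_pow
  have hQ : (1 : ℚ_[p]) - p ≠ 0 := by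
    rw [sub_ne_zero]
    exact_mod_cast hp.one_lt.ne
  -- `1/(1-p) = -1/(p-1)` is a `p`-adic integer.
  obtain ⟨u, huc⟩ : ∃ u : ℤ_[p], (u : ℚ_[p]) = (1 - (p : ℚ_[p]))⁻¹ := by
    refine ⟨-iv (p - 1), ?_⟩
    rw [PadicInt.coe_neg, hivc _ (by omega) (by omega), Nat.cast_sub hp.one_le, Nat.cast_one,
      ← inv_neg, neg_sub]
  have hu : u * (1 - (p : ℤ_[p])) = 1 := by
    apply PadicInt.ext
    push_cast
    rw [huc]
    exact inv_mul_cancel₀ hQ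
  set b : ℤ_[p] := ⟨_, bernoulli_mem (p - 3) (by omega)⟩ with hbd
  have hbc : (b : ℚ_[p]) = (bernoulli (p - 3) : ℚ) := rfl
  have hb := sum_pow_congr hp3 hbc (hiv (p - 2) (by omega) (by omega))
  obtain ⟨z, hz⟩ := core_s2 hp hp3 (by exact_mod_cast hp.ne_zero) hiv hb hu
  have hz' := congrArg (fun x : ℤ_[p] => (x : ℚ_[p])) hz
  have h3 : (3 : ℤ_[p]) * iv 3 = 1 := by exact_mod_cast hiv 3 (by omega) (by omega)
  have h3' : (3 : ℚ_[p]) * iv 3 = 1 := by exact_mod_cast congrArg (fun x : ℤ_[p] => (x : ℚ_[p])) h3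
  have hsum : (((∑ k ∈ Finset.range p, ratChoose (1 / ((p : ℚ) - 1)) k ^ (p - 1) : ℚ)) : ℚ_[p])
      = ((∑ k ∈ Finset.range p,
        (∏ j ∈ Finset.range k, (1 + p * u * iv (j + 1))) ^ (p - 1) : ℤ_[p]) : ℚ_[p]) := by
    rw [Rat.cast_sum, PadicInt.coe_sum]
    refine Finset.sum_congr rfl fun k hk => ?_
    have hk' := Finset.mem_range.1 hk
    rw [ratChoose_eq hp3, mul_pow, ← pow_mul, mul_comm k, pow_mul, hpow, one_pow, one_mul,
      Rat.cast_pow, PadicInt.coe_pow, Rat.cast_prod]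
    congr 1
    have hcp : ((∏ j ∈ Finset.range k, (1 + p * u * iv (j + 1)) : ℤ_[p]) : ℚ_[p])
        = ∏ j ∈ Finset.range k, ((1 + p * u * iv (j + 1) : ℤ_[p]) : ℚ_[p]) :=
      map_prod PadicInt.Coe.ringHom _ _
    rw [hcp]
    refine Finset.prod_congr rfl fun j hj => ?_
    have := Finset.mem_range.1 hj
    push_cast
    rw [huc, hivc (j + 1) (by omega) (by omega)]
    push_cast
    rfl
  have hfin : ((((∑ k ∈ Finset.range p, ratChoose (1 / ((p : ℚ) - 1)) k ^ (p - 1))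
        - (2 / 3) * (p : ℚ) ^ 4 * bernoulli (p - 3)) : ℚ) : ℚ_[p])
      = ((p ^ 5 * (iv 3 * z) : ℤ_[p]) : ℚ_[p]) := by
    rw [Rat.cast_sub, hsum]
    generalize (∑ k ∈ Finset.range p,
        (∏ j ∈ Finset.range k, (1 + p * u * iv (j + 1))) ^ (p - 1) : ℤ_[p]) = S at hz' ⊢
    have e3 : ((3 : ℤ_[p]) : ℚ_[p]) = 3 := by norm_cast
    have e2 : ((2 : ℤ_[p]) : ℚ_[p]) = 2 := by norm_cast
    push_cast [e3, e2] at hz' ⊢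
    rw [hbc] at hz'
    linear_combination (iv 3 : ℚ_[p]) * hz'
      - (S - 2 / 3 * (p : ℚ_[p]) ^ 4 * (bernoulli (p - 3) : ℚ)) * h3'
  have hnorm : ‖((((∑ k ∈ Finset.range p, ratChoose (1 / ((p : ℚ) - 1)) k ^ (p - 1))
        - (2 / 3) * (p : ℚ) ^ 4 * bernoulli (p - 3)) : ℚ) : ℚ_[p])‖ ≤ (p : ℝ) ^ (-(5 : ℤ)) := by
    rw [hfin, ← PadicInt.norm_def]
    exact (PadicInt.norm_le_pow_iff_mem_span_pow _ 5).2
      (Ideal.mem_span_singleton.2 (Dvd.intro _ rfl))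
  rw [Padic.eq_padicNorm, show (p : ℝ) ^ (-(5 : ℤ)) = (((p : ℚ) ^ (-(5 : ℤ)) : ℚ) : ℝ) by
    push_cast; rfl] at hnorm
  exact Rat.cast_le.1 hnorm
end

section
/- Let q be a positive integer and let p > 2q be a prime. Then for any integer k with q - 1 ≤ k ≤ p - 1, the rational numbers satisfy ∑_{j=q}^{k} 1/j^2 + ∑_{j=q}^{p+q-2-k} 1/j^2 ≡ ∑_{j=q}^{p-q} 1/j^2 + ∑_{l=0}^{q-2} 1/(k-l)^2 (mod p); that is, the p-adic valuation of the difference of the two sides is at least 1. -/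
/-!
Write `H n = ∑_{j=1}^n 1/j^2`. Since `k - l` runs over the integers from `k - q + 2` to `k`,
all four sums are differences of values of `H`, and the difference of the two sides of the
congruence is exactly `(H a + H (p-1-a)) - (H b + H (p-1-b))` with `a = k-q+1` and `b = q-1`.
Modulo `p` the quantity `H a + H (p-1-a)` does not depend on `a` (`padicNorm_reflect`): raising `a`
by one adds `1/(a+1)^2 - 1/(p-(a+1))^2`, which vanishes modulo `p` because `p - x ≡ -x`.
-/

/-- The generalized harmonic number `∑_{j=1}^n 1/j^2`, summed over the shifted index `j - 1`. -/
def harmonicSq (n : ℕ) : ℚ := ∑ j ∈ Finset.range n, 1 / ((j : ℚ) + 1) ^ 2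

lemma harmonicSq_succ (n : ℕ) : harmonicSq (n + 1) = harmonicSq n + 1 / ((n : ℚ) + 1) ^ 2 :=
  Finset.sum_range_succ _ _

/-- The lower endpoint is written `r + 1` so that the range may be empty (`d = 0`). -/
lemma sum_Icc_eq (r d : ℕ) :
    ∑ j ∈ Finset.Icc (r + 1) (r + d), 1 / (j : ℚ) ^ 2 = harmonicSq (r + d) - harmonicSq r := by
  induction d with
  | zero => simp
  | succ d ih =>
    rw [← add_assoc, Finset.sum_Icc_succ_top (by omega), ih, harmonicSq_succ]
    push_cast
    ring

lemma sum_range_sub_eq (m c : ℕ) :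
    ∑ l ∈ Finset.range m, 1 / (((c + m : ℕ) : ℚ) - (l : ℚ)) ^ 2
      = harmonicSq (c + m) - harmonicSq c := by
  induction m generalizing c with
  | zero => simp
  | succ m ih =>
    have h := ih (c + 1)
    rw [show c + 1 + m = c + (m + 1) by omega] at h
    rw [Finset.sum_range_succ, h, harmonicSq_succ]
    push_cast
    ring

/-- `1/a^2 ≡ 1/b^2` modulo `p` when `a + b = p`: the difference is `p (b - a) / (a b)^2`,
whose denominator is prime to `p`. -/
lemma padicNorm_pair {p : ℕ} (hp : p.Prime) {a b : ℕ} (ha : 0 < a) (hb : 0 < b)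
    (hab : a + b = p) :
    padicNorm p (1 / (a : ℚ) ^ 2 - 1 / (b : ℚ) ^ 2) ≤ (p : ℚ) ^ (-(1 : ℤ)) := by
  have : Fact p.Prime := ⟨hp⟩
  have ha0 : (a : ℚ) ≠ 0 := by positivity
  have hb0 : (b : ℚ) ≠ 0 := by positivity
  have hna : padicNorm p (a : ℚ) = 1 :=
    (padicNorm.nat_eq_one_iff a).2 (Nat.not_dvd_of_pos_of_lt ha (by omega))
  have hnb : padicNorm p (b : ℚ) = 1 :=
    (padicNorm.nat_eq_one_iff b).2 (Nat.not_dvd_of_pos_of_lt hb (by omega))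
  have key : 1 / (a : ℚ) ^ 2 - 1 / (b : ℚ) ^ 2
      = (p : ℚ) * (((b : ℤ) - (a : ℤ) : ℤ) : ℚ) / (a * a * (b * b)) := by
    rw [← hab]
    push_cast
    field_simp
    ring
  rw [key, padicNorm.div, padicNorm.mul, padicNorm.mul, padicNorm.mul, padicNorm.mul, hna, hnb,
    padicNorm.padicNorm_p_of_prime, zpow_neg_one]
  have h1 := padicNorm.of_int (p := p) ((b : ℤ) - (a : ℤ))
  have hpos : (0 : ℚ) ≤ (p : ℚ)⁻¹ := by positivity
  simpa using mul_le_mul_of_nonneg_left h1 hpos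

/-- `H a + H (p-1-a) ≡ H (p-1)` modulo `p`. -/
lemma padicNorm_reflect {p : ℕ} (hp : p.Prime) (a b : ℕ) (hab : a + b + 1 = p) :
    padicNorm p (harmonicSq a + harmonicSq b - harmonicSq (p - 1)) ≤ (p : ℚ) ^ (-(1 : ℤ)) := by
  have : Fact p.Prime := ⟨hp⟩
  induction a generalizing b with
  | zero =>
    rw [show p - 1 = b by omega]
    simp [harmonicSq]
  | succ a ih =>
    have h1 := ih (b + 1) (by omega)
    have h2 := padicNorm_pair hp (a := a + 1) (b := b + 1) (by omega) (by omega) (by omega)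
    have e : harmonicSq (a + 1) + harmonicSq b - harmonicSq (p - 1)
        = (harmonicSq a + harmonicSq (b + 1) - harmonicSq (p - 1))
          + (1 / ((a + 1 : ℕ) : ℚ) ^ 2 - 1 / ((b + 1 : ℕ) : ℚ) ^ 2) := by
      rw [harmonicSq_succ, harmonicSq_succ]
      push_cast
      ring
    rw [e]
    exact padicNorm.nonarchimedean.trans (max_le h1 h2)

theorem stmt4 (q : ℕ) (hq : 0 < q) (p : ℕ) (hp : p.Prime) (hpq : 2 * q < p)
    (k : ℕ) (hk1 : q - 1 ≤ k) (hk2 : k ≤ p - 1) :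
    padicNorm p ((∑ j ∈ Finset.Icc q k, 1 / (j : ℚ) ^ 2)
        + (∑ j ∈ Finset.Icc q (p + q - 2 - k), 1 / (j : ℚ) ^ 2)
        - ((∑ j ∈ Finset.Icc q (p - q), 1 / (j : ℚ) ^ 2)
          + ∑ l ∈ Finset.range (q - 1), 1 / ((k : ℚ) - (l : ℚ)) ^ 2))
      ≤ (p : ℚ) ^ (-(1 : ℤ)) := by
  have : Fact p.Prime := ⟨hp⟩
  obtain ⟨r, rfl⟩ : ∃ r, q = r + 1 := ⟨q - 1, by omega⟩
  obtain ⟨c, rfl⟩ : ∃ c, k = c + r := ⟨k - r, by omega⟩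
  -- `d` and `e` are the numbers of terms of the second and third sums; both are nonnegative.
  obtain ⟨d, hd⟩ : ∃ d, p + (r + 1) - 2 - (c + r) = r + d :=
    ⟨p + (r + 1) - 2 - (c + r) - r, by omega⟩
  obtain ⟨e, he⟩ : ∃ e, p - (r + 1) = r + e := ⟨p - (r + 1) - r, by omega⟩
  have h1 := padicNorm_reflect hp c (r + d) (by omega)
  have h2 := padicNorm_reflect hp r (r + e) (by omega)
  have h3 := sum_Icc_eq r c
  rw [add_comm r c] at h3
  rw [hd, he, Nat.add_sub_cancel, sum_range_sub_eq, sum_Icc_eq, sum_Icc_eq, h3]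
  have key : harmonicSq (c + r) - harmonicSq r + (harmonicSq (r + d) - harmonicSq r)
      - (harmonicSq (r + e) - harmonicSq r + (harmonicSq (c + r) - harmonicSq c))
      = (harmonicSq c + harmonicSq (r + d) - harmonicSq (p - 1))
        - (harmonicSq r + harmonicSq (r + e) - harmonicSq (p - 1)) := by
    ring
  rw [key]
  exact padicNorm.sub.trans (max_le h1 h2)
end

section
/- Let m > 2 and q > 0 be integers. Then for any prime p > m*q, the integer ∑_{k=q-1}^{p-1} C(k, q-1)^m is divisible by p; that is, ∑_{k=q-1}^{p-1} C(k, q-1)^m ≡ 0 (mod p). -/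
/-!
Over `ZMod p`, `(q - 1)! ^ m * C(k, q - 1) ^ m` is the value at `k` of the polynomial
`(descPochhammer (q - 1)) ^ m`, whose degree `m * (q - 1)` is less than `p - 1`. The power sums
`∑ x, x ^ i` over a field with `p` elements vanish for `i < p - 1`, so the values of such a
polynomial sum to zero; and `(q - 1)!` is invertible modulo `p`.
-/

open Polynomial in
lemma sum_eval_eq_zero_of_natDegree_lt {K : Type*} [Field K] [Fintype K] (f : K[X])
    (hf : f.natDegree < Fintype.card K - 1) : ∑ x : K, f.eval x = 0 := by
  simp_rw [eval_eq_sum_range]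
  rw [Finset.sum_comm]
  refine Finset.sum_eq_zero fun i hi => ?_
  rw [← Finset.mul_sum, FiniteField.sum_pow_lt_card_sub_one K i
    (by have := Finset.mem_range.1 hi; omega), mul_zero]

lemma sum_range_natCast_zmod {M : Type*} [AddCommMonoid M] (p : ℕ) [NeZero p] (f : ZMod p → M) :
    ∑ k ∈ Finset.range p, f k = ∑ x : ZMod p, f x :=
  Finset.sum_bij' (fun k _ => (k : ZMod p)) (fun x _ => x.val) (fun _ _ => Finset.mem_univ _)
    (fun x _ => Finset.mem_range.2 x.val_lt)
    (fun _ hk => ZMod.val_cast_of_lt (Finset.mem_range.1 hk))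
    (fun x _ => ZMod.natCast_zmod_val x) (fun _ _ => rfl)

theorem stmt5 (m q : ℕ) (hm : 2 < m) (hq : 0 < q) (p : ℕ) (hp : p.Prime)
    (hpmq : m * q < p) :
    (p : ℤ) ∣ ∑ k ∈ Finset.Icc (q - 1) (p - 1), (k.choose (q - 1) : ℤ) ^ m := by
  haveI : Fact p.Prime := ⟨hp⟩
  obtain ⟨r, rfl⟩ : ∃ r, q = r + 1 := ⟨q - 1, by omega⟩
  simp only [Nat.add_sub_cancel]
  have hdeg : m * r < p - 1 := by rw [mul_add] at hpmq; omega
  have hrp : r < p := by nlinarith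
  have hfac : ((r.factorial : ZMod p)) ≠ 0 := by
    rw [Ne, ZMod.natCast_eq_zero_iff, hp.dvd_factorial]
    omega
  -- The terms with `k < r` vanish, since `0 ^ m = 0`.
  have hrange : ∑ k ∈ Finset.Icc r (p - 1), (k.choose r : ℤ) ^ m
      = ∑ k ∈ Finset.range p, (k.choose r : ℤ) ^ m := by
    refine Finset.sum_subset (fun k hk => ?_) (fun k hk hk' => ?_)
    · simp only [Finset.mem_Icc, Finset.mem_range] at *
      omega
    · simp only [Finset.mem_Icc, Finset.mem_range] at *
      rw [Nat.choose_eq_zero_of_lt (by omega), Nat.cast_zero, zero_pow (by omega)]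
  rw [hrange, ← ZMod.intCast_zmod_eq_zero_iff_dvd]
  push_cast
  refine (mul_eq_zero.1 ?_).resolve_left (pow_ne_zero m hfac)
  have hterm : ∀ k : ℕ, (r.factorial : ZMod p) ^ m * (k.choose r : ZMod p) ^ m
      = ((descPochhammer (ZMod p) r) ^ m).eval (k : ZMod p) := fun k => by
    rw [Polynomial.eval_pow, descPochhammer_eval_eq_descFactorial,
      Nat.descFactorial_eq_factorial_mul_choose, Nat.cast_mul, mul_pow]
  rw [Finset.mul_sum, Finset.sum_congr rfl fun k _ => hterm k,
    sum_range_natCast_zmod p fun x => ((descPochhammer (ZMod p) r) ^ m).eval x]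
  apply sum_eval_eq_zero_of_natDegree_lt
  rwa [Polynomial.natDegree_pow, descPochhammer_natDegree, ZMod.card]
end

section
/- Let m > 2 and q > 0 be integers, let p > m*q be a prime, and let l be an integer with 0 ≤ l < q - 1. Then the rational number ∑_{k=q-1}^{p-1} C(k, q-1)^m / (k - l)^2 has p-adic valuation at least 1; that is, ∑_{k=q-1}^{p-1} C(k, q-1)^m / (k - l)^2 ≡ 0 (mod p). -/
/-!
Write `n = q - 1`. Since `n! * C(k, n) = ∏_{i < n} (k - i)` contains the factor `k - l`, the
quantity `n! ^ m * C(k, n) ^ m / (k - l) ^ 2` is the value at `k` of the integer polynomial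
`Q = (X - l) ^ (m - 2) * ∏_{i < n, i ≠ l} (X - i) ^ m`, of degree `m * n - 2 < p - 1`.
As `m > 2`, this polynomial vanishes at `0, …, n - 1` (at `l` too), so `n! ^ m` times the sum
equals `∑_{k < p} Q(k)`. A polynomial of degree less than `p - 1` sums to zero over `𝔽_p`
(`sum_eval_zmod_eq_zero`), so `p` divides that integer, and `n!` is prime to `p`.
-/

/-- A polynomial over `𝔽_p` of degree less than `p - 1` sums to zero over `𝔽_p`. -/
lemma sum_eval_zmod_eq_zero_s7 (p : ℕ) [Fact p.Prime] (f : Polynomial (ZMod p))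
    (hf : f.natDegree < p - 1) : ∑ x : ZMod p, f.eval x = 0 := by
  simp_rw [Polynomial.eval_eq_sum_range]
  rw [Finset.sum_comm]
  refine Finset.sum_eq_zero fun i hi => ?_
  rw [← Finset.mul_sum, FiniteField.sum_pow_lt_card_sub_one, mul_zero]
  rw [ZMod.card]
  have := Finset.mem_range.mp hi
  omega

lemma dvd_sum_range_eval (p : ℕ) (hp : p.Prime) (f : Polynomial ℤ)
    (hf : f.natDegree < p - 1) : (p : ℤ) ∣ ∑ k ∈ Finset.range p, f.eval (k : ℤ) := by
  have := Fact.mk hp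
  rw [← ZMod.intCast_zmod_eq_zero_iff_dvd]
  rw [← sum_eval_zmod_eq_zero_s7 p (f.map (Int.castRingHom (ZMod p)))
    (lt_of_le_of_lt Polynomial.natDegree_map_le hf)]
  push_cast
  refine Finset.sum_bij' (fun k _ => (k : ZMod p)) (fun x _ => x.val) (by simp)
    (fun x _ => Finset.mem_range.mpr (ZMod.val_lt x))
    (fun k hk => ZMod.val_cast_of_lt (Finset.mem_range.mp hk)) (by simp) ?_
  intro k _
  simp

/-- Over `ℤ`, with genuine subtraction, this also holds for `k < n`, where both sides vanish. -/
lemma factorial_mul_choose_eq_prod (n k : ℕ) :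
    ((n.factorial : ℤ) * (k.choose n : ℤ)) = ∏ i ∈ Finset.range n, ((k : ℤ) - (i : ℤ)) := by
  rw [← descPochhammer_eval_eq_prod_range, descPochhammer_eval_eq_descFactorial,
    Nat.descFactorial_eq_factorial_mul_choose]
  push_cast
  rfl

theorem stmt7 (m q : ℕ) (hm : 2 < m) (hq : 0 < q) (p : ℕ) (hp : p.Prime)
    (hpmq : m * q < p) (l : ℕ) (hl : l < q - 1) :
    padicNorm p (∑ k ∈ Finset.Icc (q - 1) (p - 1),
        (k.choose (q - 1) : ℚ) ^ m / ((k : ℚ) - (l : ℚ)) ^ 2)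
      ≤ (p : ℚ) ^ (-(1 : ℤ)) := by
  have := Fact.mk hp
  obtain ⟨n, rfl⟩ : ∃ n, q = n + 1 := ⟨q - 1, by omega⟩
  obtain ⟨d, rfl⟩ : ∃ d, m = d + 3 := ⟨m - 3, by omega⟩
  simp only [Nat.add_sub_cancel] at hl ⊢
  have hnp : n < p := by nlinarith
  let R : Polynomial ℤ :=
    ∏ i ∈ (Finset.range n).erase l, (Polynomial.X - Polynomial.C (i : ℤ))
  let Q : Polynomial ℤ := (Polynomial.X - Polynomial.C (l : ℤ)) ^ (d + 1) * R ^ (d + 3)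
  have hR : ∀ k : ℕ, (n.factorial : ℤ) * (k.choose n : ℤ) = ((k : ℤ) - l) * R.eval (k : ℤ) := by
    intro k
    rw [factorial_mul_choose_eq_prod, ← Finset.mul_prod_erase _ _ (Finset.mem_range.mpr hl)]
    simp [R, Polynomial.eval_prod]
  have hQ : ∀ k : ℕ, Q.eval (k : ℤ) = ((k : ℤ) - l) ^ (d + 1) * (R.eval (k : ℤ)) ^ (d + 3) := by
    intro k
    simp [Q]
  have hdeg : Q.natDegree < p - 1 := by
    have h1 : R.natDegree ≤ n - 1 := by
      refine (Polynomial.natDegree_prod_le _ _).trans ?_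
      simp only [Polynomial.natDegree_X_sub_C, Finset.sum_const, smul_eq_mul, mul_one]
      rw [Finset.card_erase_of_mem (Finset.mem_range.mpr hl), Finset.card_range]
    have h2 : Q.natDegree ≤ (d + 1) * 1 + (d + 3) * (n - 1) := by
      refine Polynomial.natDegree_mul_le.trans (Nat.add_le_add ?_ ?_)
      · exact Polynomial.natDegree_pow_le.trans (by rw [Polynomial.natDegree_X_sub_C])
      · exact Polynomial.natDegree_pow_le.trans (Nat.mul_le_mul_left _ h1)
    obtain ⟨e, rfl⟩ : ∃ e, n = e + 1 := ⟨n - 1, by omega⟩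
    simp only [Nat.add_sub_cancel] at h2
    have h3 : (d + 3) * (e + 1 + 1) = (d + 3) * e + 2 * (d + 3) := by ring
    omega
  have hzero : ∀ k : ℕ, k < n → Q.eval (k : ℤ) = 0 := by
    intro k hk
    have h := hR k
    rw [Nat.choose_eq_zero_of_lt hk, Nat.cast_zero, mul_zero, eq_comm, mul_eq_zero] at h
    rw [hQ]
    rcases h with h | h <;> simp [h]
  have hterm : ∀ k ∈ Finset.Icc n (p - 1), (n.factorial : ℚ) ^ (d + 3) *
      ((k.choose n : ℚ) ^ (d + 3) / ((k : ℚ) - (l : ℚ)) ^ 2) = ((Q.eval (k : ℤ) : ℤ) : ℚ) := by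
    intro k hk
    have hkl : ((k : ℚ) - l) ≠ 0 := by
      have h1 : l < k := lt_of_lt_of_le hl (Finset.mem_Icc.mp hk).1
      have h2 : (l : ℚ) < k := by exact_mod_cast h1
      linarith
    have h : (n.factorial : ℚ) * (k.choose n : ℚ) =
        ((k : ℚ) - l) * ((R.eval (k : ℤ) : ℤ) : ℚ) := by exact_mod_cast hR k
    rw [hQ, ← mul_div_assoc, ← mul_pow, h]
    push_cast
    field_simp
    rw [mul_pow]
    ring
  have hsum : (n.factorial : ℚ) ^ (d + 3) * (∑ k ∈ Finset.Icc n (p - 1),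
      (k.choose n : ℚ) ^ (d + 3) / ((k : ℚ) - (l : ℚ)) ^ 2) =
      ((∑ k ∈ Finset.range p, Q.eval (k : ℤ) : ℤ) : ℚ) := by
    rw [Finset.mul_sum, Finset.sum_congr rfl hterm, ← Int.cast_sum]
    congr 1
    refine Finset.sum_subset (fun k hk => ?_) (fun k hk hk' => hzero k ?_)
    · have := Finset.mem_Icc.mp hk
      exact Finset.mem_range.mpr (by omega)
    · rw [Finset.mem_range] at hk
      rw [Finset.mem_Icc] at hk'
      omega
  have hfac : padicNorm p ((n.factorial : ℚ) ^ (d + 3)) = 1 := by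
    have h1 : ¬ p ∣ n.factorial ^ (d + 3) := fun h =>
      absurd ((hp.dvd_factorial).mp (hp.dvd_of_dvd_pow h)) (by omega)
    have h2 := (padicNorm.nat_eq_one_iff (p := p) (n.factorial ^ (d + 3))).mpr h1
    exact_mod_cast h2
  have hdvd := (padicNorm.dvd_iff_norm_le (p := p) (n := 1)).mp
    (by simpa using dvd_sum_range_eval p hp Q hdeg)
  rw [← hsum, padicNorm.mul, hfac, one_mul] at hdvd
  exact_mod_cast hdvd
end

section
/- Let m > 2 and q > 0 be integers and let p > m*q be a prime. Then ∑_{k=0}^{p-1} (-1)^{k*m} * C(p/m - q, k)^m - ∑_{k=0}^{p-1} C(k+q-1, k)^{m-1} * (-1)^k * C(p - q, k) ≡ p^2 * ((m-1)/(2m)) * ∑_{k=q-1}^{p-1} C(k, q-1)^m * ∑_{j=q}^{k} 1/j^2 (mod p^3); that is, the p-adic valuation of the difference of the two sides is at least 3. -/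
/-- The subring of `p`-integral rational numbers, that is, the localization `ℤ_(p)` inside `ℚ`. -/
def pIntegral (p : ℕ) [Fact p.Prime] : Subring ℚ where
  carrier := {x | padicNorm p x ≤ 1}
  mul_mem' := by
    intro a b ha hb
    simp only [Set.mem_ofPred_eq] at *
    rw [padicNorm.mul]
    exact mul_le_one₀ ha (padicNorm.nonneg _) hb
  one_mem' := by simp
  add_mem' := by
    intro a b ha hb
    exact padicNorm.nonarchimedean.trans (max_le ha hb)
  zero_mem' := by simp
  neg_mem' := by
    intro a ha
    simpa [padicNorm.neg] using ha

lemma inv_natCast_mem {p : ℕ} [Fact p.Prime] {n : ℕ} (h : ¬ p ∣ n) :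
    (n : ℚ)⁻¹ ∈ pIntegral p := by
  change padicNorm p _ ≤ 1
  have h1 := (padicNorm.nat_eq_one_iff n).2 h
  rw [← one_div, padicNorm.div, h1]
  simp

/-- The binomial expansion to second order, with a remainder in `y ^ 3 R`. -/
lemma one_add_pow_expansion (R : Subring ℚ) {y : ℚ} (hy : y ∈ R) (n : ℕ) :
    ∃ w ∈ R, (1 + y) ^ n = 1 + n * y + n * (n - 1) / 2 * y ^ 2 + y ^ 3 * w := by
  induction n with
  | zero => exact ⟨0, R.zero_mem, by simp⟩
  | succ n ih =>
    obtain ⟨w, hw, h⟩ := ih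
    refine ⟨(n.choose 2 : ℚ) + w * (1 + y),
      R.add_mem (natCast_mem R _) (R.mul_mem hw (R.add_mem R.one_mem hy)), ?_⟩
    rw [pow_succ, h, Nat.cast_choose_two]
    push_cast
    ring

lemma prod_expansion (R : Subring ℚ) (p m : ℕ) (hm0 : (m : ℚ) ≠ 0) (hm : (m : ℚ)⁻¹ ∈ R)
    (h2 : (2 : ℚ)⁻¹ ∈ R) (u : ℕ → ℚ) (k : ℕ) (hu : ∀ i < k, u i ∈ R) :
    ∃ z ∈ R, (∏ i ∈ Finset.range k, (1 - p * (m : ℚ)⁻¹ * u i)) ^ m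
      = ∏ i ∈ Finset.range k, (1 - p * 1 * u i)
        + (p : ℚ) ^ 2 * (((m : ℚ) - 1) / (2 * m)) * ∑ i ∈ Finset.range k, u i ^ 2
        + (p : ℚ) ^ 3 * z := by
  have hp : (p : ℚ) ∈ R := natCast_mem R p
  have hc : ((m : ℚ) - 1) / (2 * m) ∈ R := by
    rw [div_eq_mul_inv, mul_inv]
    exact R.mul_mem (R.sub_mem (natCast_mem R m) R.one_mem) (R.mul_mem h2 hm)
  -- The congruence `∏ (1 - p u_i) ≡ 1 (mod p)` has to be carried through the same induction.
  suffices h : ∃ z ∈ R, ∃ v ∈ R, ∏ i ∈ Finset.range k, (1 - (p : ℚ) * 1 * u i) = 1 + p * v ∧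
      (∏ i ∈ Finset.range k, (1 - p * (m : ℚ)⁻¹ * u i)) ^ m
      = ∏ i ∈ Finset.range k, (1 - p * 1 * u i)
        + (p : ℚ) ^ 2 * (((m : ℚ) - 1) / (2 * m)) * ∑ i ∈ Finset.range k, u i ^ 2
        + (p : ℚ) ^ 3 * z by
    obtain ⟨z, hz, v, hv, -, h⟩ := h
    exact ⟨z, hz, h⟩
  induction k with
  | zero => exact ⟨0, R.zero_mem, 0, R.zero_mem, by simp, by simp⟩
  | succ k ih =>
    obtain ⟨z, hz, v, hv, hQ, hP⟩ := ih fun i hi => hu i (by omega)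
    have huk := hu k (by omega)
    have hS : ∑ i ∈ Finset.range k, u i ^ 2 ∈ R :=
      R.sum_mem fun i hi => R.pow_mem (hu i (by have := Finset.mem_range.1 hi; omega)) 2
    have hy : -(p * (m : ℚ)⁻¹ * u k) ∈ R := R.neg_mem (R.mul_mem (R.mul_mem hp hm) huk)
    obtain ⟨w, hw, hexp⟩ := one_add_pow_expansion R hy m
    set c := ((m : ℚ) - 1) / (2 * m) with hcdef
    set w' := -((m : ℚ)⁻¹ * u k) ^ 3 * w with hw'
    have hw'R : w' ∈ R := R.mul_mem (R.neg_mem (R.pow_mem (R.mul_mem hm huk) 3)) hw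
    have hexp' : (1 - p * (m : ℚ)⁻¹ * u k) ^ m
        = 1 - p * u k + p ^ 2 * c * u k ^ 2 + p ^ 3 * w' := by
      rw [sub_eq_add_neg, hexp, hw', hcdef]
      field_simp
      ring
    rw [Finset.prod_range_succ, Finset.prod_range_succ, Finset.sum_range_succ, mul_pow, hP, hexp',
      hQ]
    set S := ∑ i ∈ Finset.range k, u i ^ 2
    refine ⟨v * c * u k ^ 2 + (1 + p * v) * w' + c * S * (-u k + p * c * u k ^ 2 + p ^ 2 * w')
      + z * (1 - p * u k + p ^ 2 * c * u k ^ 2 + p ^ 3 * w'), ?_, v - u k - p * v * u k, ?_,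
      by ring, by ring⟩
    · have h1 := R.one_mem
      have hpow : ∀ n : ℕ, (p : ℚ) ^ n ∈ R := fun n => R.pow_mem hp n
      have hu2 := R.pow_mem huk 2
      refine R.add_mem (R.add_mem (R.add_mem ?_ ?_) ?_) ?_
      · exact R.mul_mem (R.mul_mem hv hc) hu2
      · exact R.mul_mem (R.add_mem h1 (R.mul_mem hp hv)) hw'R
      · exact R.mul_mem (R.mul_mem hc hS) (R.add_mem (R.add_mem (R.neg_mem huk)
          (R.mul_mem (R.mul_mem hp hc) hu2)) (R.mul_mem (hpow 2) hw'R))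
      · exact R.mul_mem hz (R.add_mem (R.add_mem (R.sub_mem h1 (R.mul_mem hp huk))
          (R.mul_mem (R.mul_mem (hpow 2) hc) hu2)) (R.mul_mem (hpow 3) hw'R))
    · exact R.sub_mem (R.sub_mem hv huk) (R.mul_mem (R.mul_mem hp hv) huk)

lemma neg_one_pow_mul_ratChoose (x t : ℚ) (r k : ℕ) :
    (-1) ^ k * ratChoose (x * t - (r + 1 : ℕ)) k
      = ((k + r).choose k : ℚ) * ∏ i ∈ Finset.range k, (1 - x * t * ((r + 1 + i : ℕ) : ℚ)⁻¹) := by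
  unfold ratChoose
  induction k with
  | zero => simp
  | succ k ih =>
    have hc : ((k + 1 + r).choose (k + 1) : ℚ) = (k + r).choose k * (k + r + 1) / (k + 1) := by
      rw [eq_div_iff (by positivity)]
      have := Nat.add_one_mul_choose_eq (k + r) k
      rw [show k + 1 + r = k + r + 1 by ring]
      have h' : (((k + r + 1) * (k + r).choose k : ℕ) : ℚ)
        = (((k + r + 1).choose (k + 1) * (k + 1) : ℕ) : ℚ) := by rw [this]
      push_cast at h'
      linarith
    rw [Finset.prod_range_succ, Finset.prod_range_succ, hc]
    have h1 : ((r : ℚ) + 1 + k) ≠ 0 := by positivity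
    have h2 : ((k : ℚ) + 1) ≠ 0 := by positivity
    calc _ = ((-1) ^ k * ∏ j ∈ Finset.range k, (x * t - (r + 1 : ℕ) - j) / ((j : ℚ) + 1)) *
          (-((x * t - (r + 1 : ℕ) - k) / ((k : ℚ) + 1))) := by ring
      _ = _ := by
        rw [ih]
        push_cast
        field_simp
        ring

/-- For `p - q < k < p`, the numerator factor `p / m - p` at index `p - q` is divisible by `p`, and
all the denominators are units. -/
lemma ratChoose_div_mem (p m q k : ℕ) [hp : Fact p.Prime] (hm : (m : ℚ)⁻¹ ∈ pIntegral p)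
    (hq : q ≤ p) (hk : p - q < k) (hkp : k < p) :
    ∃ z ∈ pIntegral p, ratChoose ((p : ℚ) * (m : ℚ)⁻¹ - q) k = p * z := by
  set R := pIntegral p
  have hinv : ∀ j ∈ Finset.range k, ((j : ℚ) + 1)⁻¹ ∈ R := by
    intro j hj
    have hj' := Finset.mem_range.1 hj
    exact_mod_cast inv_natCast_mem (p := p) (n := j + 1)
      (Nat.not_dvd_of_pos_of_lt (by omega) (by omega))
  have hmem : p - q ∈ Finset.range k := Finset.mem_range.2 hk
  unfold ratChoose
  rw [← Finset.mul_prod_erase _ _ hmem]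
  refine ⟨((m : ℚ)⁻¹ - 1) * (((p - q : ℕ) : ℚ) + 1)⁻¹ * ∏ j ∈ (Finset.range k).erase (p - q),
    ((p : ℚ) * (m : ℚ)⁻¹ - q - j) / (j + 1), ?_, ?_⟩
  · refine R.mul_mem (R.mul_mem (R.sub_mem hm R.one_mem) (hinv _ hmem)) (R.prod_mem ?_)
    intro j hj
    rw [div_eq_mul_inv]
    exact R.mul_mem (R.sub_mem (R.sub_mem (R.mul_mem (natCast_mem R _) hm) (natCast_mem R _))
      (natCast_mem R _)) (hinv j (Finset.mem_of_mem_erase hj))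
  · rw [Nat.cast_sub hq]
    ring

theorem stmt10 (m q : ℕ) (hm : 2 < m) (hq : 0 < q) (p : ℕ) (hp : p.Prime)
    (hpmq : m * q < p) :
    padicNorm p (((∑ k ∈ Finset.range p, (-1 : ℚ) ^ (k * m) * ratChoose ((p : ℚ) / m - q) k ^ m)
          - ∑ k ∈ Finset.range p,
              ((k + q - 1).choose k : ℚ) ^ (m - 1) * (-1) ^ k * ratChoose ((p : ℚ) - q) k)
        - (p : ℚ) ^ 2 * (((m : ℚ) - 1) / (2 * m))
            * ∑ k ∈ Finset.Icc (q - 1) (p - 1),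
                (k.choose (q - 1) : ℚ) ^ m * ∑ j ∈ Finset.Icc q k, 1 / (j : ℚ) ^ 2)
      ≤ (p : ℚ) ^ (-(3 : ℤ)) := by
  have : Fact p.Prime := ⟨hp⟩
  have hp0 : (p : ℚ) ≠ 0 := by exact_mod_cast hp.ne_zero
  have hqp : q < p := by nlinarith
  have hmp : m < p := by nlinarith
  set R := pIntegral p with hR
  have hm0 : (m : ℚ) ≠ 0 := by
    have : m ≠ 0 := by omega
    exact_mod_cast this
  have hminv : (m : ℚ)⁻¹ ∈ R :=
    inv_natCast_mem (Nat.not_dvd_of_pos_of_lt (by omega) hmp)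
  have h2inv : (2 : ℚ)⁻¹ ∈ R := by
    exact_mod_cast inv_natCast_mem (p := p) (n := 2)
      (Nat.not_dvd_of_pos_of_lt (by omega) (by omega))
  suffices h : ∀ x : ℚ, x / (p : ℚ) ^ 3 ∈ R → padicNorm p x ≤ (p : ℚ) ^ (-(3 : ℤ)) by
    apply h
    obtain ⟨r, rfl⟩ : ∃ r, q = r + 1 := ⟨q - 1, by omega⟩
    obtain ⟨n, hn⟩ : ∃ n, p = n + r := ⟨p - r, by omega⟩
    -- The right-hand sum, reindexed by `k ↦ r + k`.
    have hsum : ∑ k ∈ Finset.Icc (r + 1 - 1) (p - 1),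
          (k.choose (r + 1 - 1) : ℚ) ^ m * ∑ j ∈ Finset.Icc (r + 1) k, 1 / (j : ℚ) ^ 2
        = ∑ k ∈ Finset.range n, ((k + r).choose k : ℚ) ^ m *
            ∑ i ∈ Finset.range k, (((r + 1 + i : ℕ) : ℚ)⁻¹) ^ 2 := by
      have e1 : Finset.Icc (r + 1 - 1) (p - 1) = Finset.Ico r p := by
        ext x; simp only [Finset.mem_Icc, Finset.mem_Ico]; omega
      rw [e1, Finset.sum_Ico_eq_sum_range, show p - r = n by omega]
      refine Finset.sum_congr rfl fun k _ => ?_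
      have e2 : Finset.Icc (r + 1) (r + k) = Finset.Ico (r + 1) (r + 1 + k) := by
        ext x; simp only [Finset.mem_Icc, Finset.mem_Ico]; omega
      rw [e2, Finset.sum_Ico_eq_sum_range, show r + 1 + k - (r + 1) = k by omega,
        Nat.add_sub_cancel, Nat.add_comm r k, Nat.choose_symm_add]
      simp
    rw [hsum, ← Finset.sum_sub_distrib]
    have hsplit : ∀ f : ℕ → ℚ, ∑ k ∈ Finset.range p, f k
        = ∑ k ∈ Finset.range n, f k + ∑ k ∈ Finset.range r, f (n + k) := by
      intro f
      rw [← Finset.sum_range_add, hn]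
    rw [hsplit, add_sub_right_comm, Finset.mul_sum, ← Finset.sum_sub_distrib, add_div,
      Finset.sum_div, Finset.sum_div]
    refine R.add_mem (R.sum_mem fun k hk => ?_) (R.sum_mem fun k hk => ?_)
    · have hk' := Finset.mem_range.1 hk
      obtain ⟨z, hz, h⟩ := prod_expansion R p m hm0 hminv h2inv
        (fun i => ((r + 1 + i : ℕ) : ℚ)⁻¹) k fun i hi =>
          inv_natCast_mem (Nat.not_dvd_of_pos_of_lt (by omega) (by omega))
      have t1 := neg_one_pow_mul_ratChoose p (m : ℚ)⁻¹ r k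
      have t2 := neg_one_pow_mul_ratChoose p 1 r k
      rw [← div_eq_mul_inv] at t1
      rw [mul_one] at t2
      rw [pow_mul, ← mul_pow, t1, mul_assoc _ ((-1 : ℚ) ^ k), t2, mul_pow, div_eq_mul_inv (p : ℚ),
        h, show k + (r + 1) - 1 = k + r by omega]
      have e : ((k + r).choose k : ℚ) ^ m
          = ((k + r).choose k : ℚ) ^ (m - 1) * ((k + r).choose k : ℚ) := by
        rw [← pow_succ]; congr 1; omega
      convert R.mul_mem (R.pow_mem (natCast_mem R ((k + r).choose k)) m) hz using 1
      rw [div_eq_iff (pow_ne_zero 3 hp0), e]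
      simp only [mul_one]
      ring
    · have hk' := Finset.mem_range.1 hk
      obtain ⟨z, hz, h⟩ := ratChoose_div_mem p m (r + 1) (n + k) hminv (by omega) (by omega)
        (by omega)
      have h0 : ratChoose ((p : ℚ) - (r + 1 : ℕ)) (n + k) = 0 := by
        refine Finset.prod_eq_zero (i := p - (r + 1)) (Finset.mem_range.2 (by omega)) ?_
        rw [Nat.cast_sub (by omega)]
        simp
      rw [h0, div_eq_mul_inv (p : ℚ), h, mul_zero, sub_zero]
      have e : ((p : ℚ) * z) ^ m = p ^ 3 * (p ^ (m - 3) * z ^ m) := by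
        rw [mul_pow, ← mul_assoc, ← pow_add]; congr 2; omega
      have hmem : (-1 : ℚ) ^ ((n + k) * m) * (p ^ (m - 3) * z ^ m) ∈ R :=
        R.mul_mem (R.pow_mem (R.neg_mem R.one_mem) _)
          (R.mul_mem (R.pow_mem (natCast_mem R p) _) (R.pow_mem hz _))
      convert hmem using 1
      rw [e, div_eq_iff (pow_ne_zero 3 hp0)]
      ring
  intro x hx
  have hx' : padicNorm p (x / (p : ℚ) ^ 3) ≤ 1 := hx
  have e : x = p ^ 3 * (x / (p : ℚ) ^ 3) := by field_simp
  have hpow : padicNorm p ((p : ℚ) ^ 3) = (p : ℚ) ^ (-(3 : ℤ)) := by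
    have := padicNorm.padicNorm_p_of_prime (p := p)
    rw [pow_succ, pow_two, padicNorm.mul, padicNorm.mul, this, zpow_neg,
      show (3 : ℤ) = (3 : ℕ) by rfl, zpow_natCast]
    ring
  rw [e, padicNorm.mul, hpow]
  exact mul_le_of_le_one_right (by positivity) hx'
end
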